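/- arXiv:2207.12704 — 5 statements merged into one kernel-verified Lean document; each statement's English description precedes it below -/
import Mathlib

section
/- Let A be a set with a length function μ and let w be an element of the free group F(A), represented by a word 𝐰 in the alphabet A ⊔ A⁻¹. Then the word norm satisfies ‖w‖_{F(A;μ)} = min{ μ(𝐮) : 𝐮 is a cancellation sequence in 𝐰 }; in particular the right-hand side is independent of the choice of representing word 𝐰, and the minimum is attained. -/
/-!
Deleting a symbol `x` from a word changes the group element by a conjugate of `x^{±1}`, so a
cancellation sequence of total length `c` exhibits the element as a product of conjugates of
generators of total length `c` (`Deletes.mem_wordNormSet`). Conversely, a product of conjugates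
`u a u⁻¹` is represented by a word in which the middle letters `a` form a cancellation sequence
of the same length (`exists_word_of_conj_list`). It remains to see that the lengths of
cancellation sequences do not depend on the representing word (`CancelCost.of_mk_eq`); by
confluence of free reduction this only has to be checked for one elementary reduction
`L₁ x x⁻¹ L₂ → L₁ L₂`. The only interesting case is that exactly one symbol of the pair is
deleted: the surviving one cancels against a letter of `L₁ L₂` with the same weight, which can be
deleted instead (`exists_deletes_partner`).

There are finitely many cancellation sequences and at least one (delete everything), so the
minimum is attained.
-/

/-- The set of total lengths of expressions of `g` as a product of conjugates
of generators `gen i ^ {±1}`, each weighted by the length function `ℓ`. -/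
def wordNormSet {G : Type*} [Group G] {I : Type*}
    (gen : I → G) (ℓ : I → ℝ) (g : G) : Set ℝ :=
  { x | ∃ l : List (G × I × Bool),
      g = (l.map fun p => p.1 * (if p.2.2 then gen p.2.1 else (gen p.2.1)⁻¹) * p.1⁻¹).prod ∧
      x = (l.map fun p => ℓ p.2.1).sum }

/-- The conjugation-invariant word norm associated to a length function. -/
noncomputable def wordNorm {G : Type*} [Group G] {I : Type*}
    (gen : I → G) (ℓ : I → ℝ) (g : G) : ℝ :=
  sInf (wordNormSet gen ℓ g)

/-- The word obtained from `w` by deleting the symbols at the positions in `s`. -/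
def deleteSeq {α : Type*} (w : List (α × Bool)) (s : Finset (Fin w.length)) :
    List (α × Bool) :=
  ((List.finRange w.length).filter (fun i => i ∉ s)).map w.get

/-- `Deletes μ w v c`: the word `v` arises from `w` by deleting some symbols, and the deleted
symbols have total length `c`. -/
inductive Deletes {α : Type*} (μ : α → ℝ) : List (α × Bool) → List (α × Bool) → ℝ → Prop
  | nil : Deletes μ [] [] 0
  | keep (x : α × Bool) {w v : List (α × Bool)} {c : ℝ} :
      Deletes μ w v c → Deletes μ (x :: w) (x :: v) c
  | drop (x : α × Bool) {w v : List (α × Bool)} {c : ℝ} :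
      Deletes μ w v c → Deletes μ (x :: w) v (μ x.1 + c)

/-- `c` is the total length of some cancellation sequence in `w`. -/
def CancelCost {α : Type*} (μ : α → ℝ) (w : List (α × Bool)) (c : ℝ) : Prop :=
  ∃ v, Deletes μ w v c ∧ FreeGroup.mk v = 1

section

variable {α : Type*} {μ : α → ℝ}

/-! ### Deletions -/

theorem Deletes.refl (w : List (α × Bool)) : Deletes μ w w 0 := by
  induction w with
  | nil => exact .nil
  | cons x w ih => exact .keep x ih

theorem Deletes.append {w₁ v₁ w₂ v₂ : List (α × Bool)} {c₁ c₂ : ℝ}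
    (h₁ : Deletes μ w₁ v₁ c₁) (h₂ : Deletes μ w₂ v₂ c₂) :
    Deletes μ (w₁ ++ w₂) (v₁ ++ v₂) (c₁ + c₂) := by
  induction h₁ with
  | nil => simpa using h₂
  | keep x _ ih => exact .keep x ih
  | drop x _ ih => rw [add_assoc]; exact .drop x ih

theorem Deletes.of_append {w₁ w₂ v : List (α × Bool)} {c : ℝ}
    (h : Deletes μ (w₁ ++ w₂) v c) :
    ∃ v₁ v₂ c₁ c₂, Deletes μ w₁ v₁ c₁ ∧ Deletes μ w₂ v₂ c₂ ∧ v = v₁ ++ v₂ ∧ c = c₁ + c₂ := by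
  induction w₁ generalizing v c with
  | nil => exact ⟨[], v, 0, c, .nil, h, rfl, by simp⟩
  | cons x w₁ ih =>
    cases h with
    | keep _ h =>
      obtain ⟨v₁, v₂, c₁, c₂, h₁, h₂, rfl, rfl⟩ := ih h
      exact ⟨_, _, _, _, .keep x h₁, h₂, rfl, rfl⟩
    | drop _ h =>
      obtain ⟨v₁, v₂, c₁, c₂, h₁, h₂, rfl, rfl⟩ := ih h
      exact ⟨_, _, _, _, .drop x h₁, h₂, rfl, by ring⟩

theorem Deletes.trans {w v u : List (α × Bool)} {c d : ℝ}
    (h : Deletes μ w v c) (h' : Deletes μ v u d) : Deletes μ w u (c + d) := by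
  induction h generalizing u d with
  | nil => simpa using h'
  | keep x _ ih =>
    cases h' with
    | keep _ h' => exact .keep x (ih h')
    | drop _ h' =>
      rw [add_left_comm]; exact .drop x (ih h')
  | drop x _ ih => rw [add_assoc]; exact .drop x (ih h')

theorem Deletes.middle (P Q : List (α × Bool)) (y : α × Bool) :
    Deletes μ (P ++ y :: Q) (P ++ Q) (μ y.1) := by
  simpa using (Deletes.refl (μ := μ) P).append (.drop y (.refl Q))

/-! ### Independence of the representing word -/

theorem mk_append (P Q : List (α × Bool)) :
    FreeGroup.mk (P ++ Q) = FreeGroup.mk P * FreeGroup.mk Q := FreeGroup.mul_mk.symm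

theorem mk_cons (y : α × Bool) (Q : List (α × Bool)) :
    FreeGroup.mk (y :: Q) = FreeGroup.mk [y] * FreeGroup.mk Q := mk_append [y] Q

theorem mk_pair (a : α) (b : Bool) :
    FreeGroup.mk [(a, b)] * FreeGroup.mk [(a, !b)] = 1 := by
  rw [FreeGroup.mul_mk, FreeGroup.one_eq_mk]
  exact Quot.sound FreeGroup.Red.Step.cons_not

/-- A word that reduces to a single letter contains that letter, with words representing `1` on
both sides. -/
theorem exists_split_of_red_singleton {L : List (α × Bool)} {y : α × Bool}
    (h : FreeGroup.Red L [y]) :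
    ∃ P Q, L = P ++ y :: Q ∧ FreeGroup.mk P = 1 ∧ FreeGroup.mk Q = 1 := by
  induction h using Relation.ReflTransGen.head_induction_on with
  | refl => exact ⟨[], [], rfl, rfl, rfl⟩
  | head hs _ ih =>
    obtain ⟨P', Q, e, h1, h2⟩ := ih
    cases hs with
    | @not L₁ L₂ a b =>
      -- The cancelled pair is reinserted either after or before the surviving letter.
      rcases List.append_eq_append_iff.1 e with ⟨R, rfl, rfl⟩ | ⟨R, rfl, he⟩
      · refine ⟨L₁ ++ (a, b) :: (a, !b) :: R, Q, by simp, ?_, h2⟩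
        rw [mk_append, mk_cons, mk_cons (a, !b), ← mul_assoc (FreeGroup.mk [(a, b)]), mk_pair,
          one_mul, ← mk_append, h1]
      · cases R with
        | nil =>
          simp only [List.nil_append] at he
          subst he
          refine ⟨P' ++ [(a, b), (a, !b)], Q, by simp, ?_, h2⟩
          rw [mk_append, h1, mk_cons, mk_pair, one_mul]
        | cons z R =>
          simp only [List.cons_append, List.cons.injEq] at he
          obtain ⟨rfl, rfl⟩ := he
          refine ⟨P', R ++ (a, b) :: (a, !b) :: L₂, by simp, h1, ?_⟩
          rw [mk_append, mk_cons, mk_cons (a, !b), ← mul_assoc (FreeGroup.mk [(a, b)]), mk_pair,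
            one_mul, ← mk_append, h2]

theorem red_singleton_of_mk_eq {L : List (α × Bool)} {y : α × Bool}
    (h : FreeGroup.mk L = FreeGroup.mk [y]) : FreeGroup.Red L [y] := by
  obtain ⟨M, h1, h2⟩ := FreeGroup.Red.exact.1 h
  rwa [FreeGroup.Red.singleton_iff.1 h2] at h1

/-- In a word representing `1`, each letter `x` has a partner of the same length such that
removing both again gives a word representing `1`. -/
theorem exists_deletes_partner {L₁ L₂ : List (α × Bool)} {x : α × Bool}
    (h : FreeGroup.mk (L₁ ++ x :: L₂) = 1) : CancelCost μ (L₁ ++ L₂) (μ x.1) := by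
  obtain ⟨a, b⟩ := x
  -- Cyclic rotation turns the hypothesis into a statement about a single remaining letter.
  have hrot : FreeGroup.mk (L₂ ++ L₁) = FreeGroup.mk [(a, !b)] := by
    rw [mk_append, mk_cons, ← mul_assoc] at h
    rw [mk_append, ← inv_eq_of_mul_eq_one_right (mk_pair a b),
      eq_inv_of_mul_eq_one_right h, mul_inv_rev, inv_mul_cancel_right]
  obtain ⟨P, Q, e, hP, hQ⟩ := exists_split_of_red_singleton (red_singleton_of_mk_eq hrot)
  have hswap : ∀ {M N : List (α × Bool)}, FreeGroup.mk (M ++ N) = 1 →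
      FreeGroup.mk (N ++ M) = 1 := by
    intro M N h
    rw [mk_append] at h ⊢
    exact mul_eq_one_comm.1 h
  rcases List.append_eq_append_iff.1 e with ⟨R, rfl, rfl⟩ | ⟨R, rfl, he⟩
  · refine ⟨R ++ (Q ++ L₂), ?_, ?_⟩
    · simpa using Deletes.middle (μ := μ) R (Q ++ L₂) (a, !b)
    · rw [mk_append, mk_append, hQ, one_mul, ← mk_append, hswap hP]
  · cases R with
    | nil =>
      simp only [List.nil_append] at he
      subst he
      refine ⟨Q ++ P, ?_, by rw [mk_append, hQ, hP, one_mul]⟩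
      simpa using Deletes.middle (μ := μ) [] (Q ++ P) (a, !b)
    | cons z R =>
      simp only [List.cons_append, List.cons.injEq] at he
      obtain ⟨rfl, rfl⟩ := he
      refine ⟨(L₁ ++ P) ++ R, ?_, ?_⟩
      · simpa using Deletes.middle (μ := μ) (L₁ ++ P) R (a, !b)
      · rw [mk_append, mk_append, hP, mul_one, ← mk_append, hswap hQ]

theorem CancelCost.of_step {w w' : List (α × Bool)} {c : ℝ} (hμ : ∀ a, 0 ≤ μ a)
    (hs : FreeGroup.Red.Step w w') (h : CancelCost μ w c) : ∃ c' ≤ c, CancelCost μ w' c' := by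
  obtain ⟨v, hd, hv⟩ := h
  cases hs with
  | @not L₁ L₂ a b =>
    obtain ⟨v₁, v₂, c₁, c₂, h₁, h₂, rfl, rfl⟩ := hd.of_append
    have ha := hμ a
    cases h₂ with
    | keep _ h₂ =>
      cases h₂ with
      | keep _ h₂ =>
        refine ⟨_, le_rfl, _, h₁.append h₂, ?_⟩
        rwa [mk_append, mk_cons, mk_cons (a, !b), ← mul_assoc (FreeGroup.mk [(a, b)]), mk_pair,
          one_mul, ← mk_append] at hv
      | drop _ h₂ =>
        obtain ⟨u, hu, hu1⟩ := exists_deletes_partner (μ := μ) hv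
        exact ⟨_, by dsimp only; linarith, u, (h₁.append h₂).trans hu, hu1⟩
    | drop _ h₂ =>
      cases h₂ with
      | keep _ h₂ =>
        obtain ⟨u, hu, hu1⟩ := exists_deletes_partner (μ := μ) hv
        exact ⟨_, by dsimp only; linarith, u, (h₁.append h₂).trans hu, hu1⟩
      | drop _ h₂ =>
        exact ⟨_, by dsimp only; linarith, _, h₁.append h₂, hv⟩

/-- A cancellation sequence survives the insertion of a cancelling pair, both of whose symbols
are kept. -/
theorem CancelCost.of_step_symm {w w' : List (α × Bool)} {c : ℝ}
    (hs : FreeGroup.Red.Step w w') (h : CancelCost μ w' c) : CancelCost μ w c := by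
  obtain ⟨v, hd, hv⟩ := h
  cases hs with
  | @not L₁ L₂ a b =>
    obtain ⟨v₁, v₂, c₁, c₂, h₁, h₂, rfl, rfl⟩ := hd.of_append
    refine ⟨_, h₁.append (.keep (a, b) (.keep (a, !b) h₂)), ?_⟩
    rwa [mk_append, mk_cons, mk_cons (a, !b), ← mul_assoc (FreeGroup.mk [(a, b)]), mk_pair,
      one_mul, ← mk_append]

theorem CancelCost.of_mk_eq {w w' : List (α × Bool)} {c : ℝ} (hμ : ∀ a, 0 ≤ μ a)
    (hw : FreeGroup.mk w = FreeGroup.mk w') (h : CancelCost μ w c) :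
    ∃ c' ≤ c, CancelCost μ w' c' := by
  obtain ⟨M, h1, h2⟩ := FreeGroup.Red.exact.1 hw
  clear hw
  have hM : ∃ c' ≤ c, CancelCost μ M c' := by
    clear h2
    induction h1 with
    | refl => exact ⟨c, le_rfl, h⟩
    | tail _ hs ih =>
      obtain ⟨c', hc', h'⟩ := ih
      obtain ⟨c'', hc'', h''⟩ := h'.of_step hμ hs
      exact ⟨c'', hc''.trans hc', h''⟩
  obtain ⟨c', hc', hM⟩ := hM
  refine ⟨c', hc', ?_⟩
  clear h1
  induction h2 using Relation.ReflTransGen.head_induction_on with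
  | refl => exact hM
  | head hs _ ih => exact ih.of_step_symm hs

/-! ### Comparison with products of conjugates -/

theorem mk_letter (a : α) (b : Bool) :
    FreeGroup.mk [(a, b)] = if b then FreeGroup.of a else (FreeGroup.of a)⁻¹ := by
  cases b
  · simp [FreeGroup.of, FreeGroup.inv_mk, FreeGroup.invRev]
  · rfl

theorem wordNormSet_conj {G I : Type*} [Group G] {gen : I → G} {ℓ : I → ℝ} {g : G} {x : ℝ}
    (k : G) (h : x ∈ wordNormSet gen ℓ g) : x ∈ wordNormSet gen ℓ (k * g * k⁻¹) := by
  obtain ⟨l, rfl, rfl⟩ := h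
  refine ⟨l.map fun p => (k * p.1, p.2), ?_, by simp [Function.comp_def]⟩
  rw [← MulAut.conj_apply, map_list_prod]
  simp [Function.comp_def, mul_assoc]

theorem Deletes.mem_wordNormSet {w v : List (α × Bool)} {c : ℝ} (h : Deletes μ w v c) :
    c ∈ wordNormSet FreeGroup.of μ (FreeGroup.mk w * (FreeGroup.mk v)⁻¹) := by
  induction h with
  | nil => exact ⟨[], by simp [FreeGroup.one_eq_mk], by simp⟩
  | @keep x w v c _ ih =>
    have := wordNormSet_conj (FreeGroup.mk [x]) ih
    rw [mk_cons, mk_cons x v]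
    simpa only [mul_assoc, mul_inv_rev] using this
  | @drop x w v c _ ih =>
    obtain ⟨l, hl, rfl⟩ := ih
    refine ⟨(1, x) :: l, ?_, by simp⟩
    rw [mk_cons, mul_assoc, hl]
    simp [mk_letter x.1 x.2]

theorem exists_word_of_conj_list (l : List (FreeGroup α × α × Bool)) :
    ∃ w, FreeGroup.mk w = (l.map fun p => p.1 *
        (if p.2.2 then FreeGroup.of p.2.1 else (FreeGroup.of p.2.1)⁻¹) * p.1⁻¹).prod ∧
      CancelCost μ w (l.map fun p => μ p.2.1).sum := by
  induction l with
  | nil => exact ⟨[], rfl, [], .nil, rfl⟩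
  | cons p l ih =>
    obtain ⟨w, hw, v, hd, hv⟩ := ih
    obtain ⟨g, a, b⟩ := p
    obtain ⟨u, rfl⟩ := Quot.exists_rep g
    change List (α × Bool) at u
    refine ⟨(u ++ (a, b) :: FreeGroup.invRev u) ++ w, ?_, (u ++ FreeGroup.invRev u) ++ v, ?_, ?_⟩
    · rw [mk_append, mk_append, mk_cons, hw, mk_letter, ← FreeGroup.inv_mk, List.map_cons,
        List.prod_cons, ← mul_assoc]
      rfl
    · simpa only [List.map_cons, List.sum_cons] using (Deletes.middle u _ (a, b)).append hd
    · rw [mk_append, mk_append, hv, ← FreeGroup.inv_mk, mul_inv_cancel, one_mul]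

/-! ### Deletions as sets of positions -/

theorem deleteSeq_cons (x : α × Bool) (w : List (α × Bool)) (s : Finset (Fin (x :: w).length))
    (t : Finset (Fin w.length)) (ht : ∀ i : Fin w.length, i ∈ t ↔ Fin.succ i ∈ s) :
    deleteSeq (x :: w) s =
      if (0 : Fin (w.length + 1)) ∈ s then deleteSeq w t else x :: deleteSeq w t := by
  have key : deleteSeq w t =
      (((List.finRange w.length).map Fin.succ).filter (fun i => i ∉ s)).map (x :: w).get := by
    simp only [deleteSeq, List.filter_map, List.map_map, Function.comp_def, ht]
    rfl
  rw [key]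
  simp only [deleteSeq, List.length_cons, List.finRange_succ, List.filter_cons]
  split_ifs <;> simp_all

theorem sum_cons (x : α × Bool) (w : List (α × Bool)) (s : Finset (Fin (x :: w).length))
    (t : Finset (Fin w.length)) (ht : ∀ i : Fin w.length, i ∈ t ↔ Fin.succ i ∈ s) :
    ∑ i ∈ s, μ ((x :: w).get i).1 =
      (if (0 : Fin (w.length + 1)) ∈ s then μ x.1 else 0) + ∑ i ∈ t, μ (w.get i).1 := by
  classical
  rw [← Finset.sum_ite_mem_eq s, ← Finset.sum_ite_mem_eq t]
  simp only [ht]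
  exact Fin.sum_univ_succ (n := w.length) (fun i => if i ∈ s then μ ((x :: w).get i).1 else 0)

theorem deletes_deleteSeq (w : List (α × Bool)) (s : Finset (Fin w.length)) :
    Deletes μ w (deleteSeq w s) (∑ i ∈ s, μ (w.get i).1) := by
  induction w with
  | nil =>
    have hs : s = ∅ := Finset.eq_empty_of_forall_notMem fun i => i.elim0
    subst hs
    exact .nil
  | cons x w ih =>
    have ht : ∀ i : Fin w.length,
        i ∈ Finset.univ.filter (fun i : Fin w.length => Fin.succ i ∈ s) ↔ Fin.succ i ∈ s := by
      simp
    rw [deleteSeq_cons x w s _ ht, sum_cons x w s _ ht]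
    split_ifs
    · exact .drop x (ih _)
    · rw [zero_add]; exact .keep x (ih _)

theorem Deletes.exists_finset {w v : List (α × Bool)} {c : ℝ} (h : Deletes μ w v c) :
    ∃ s : Finset (Fin w.length), v = deleteSeq w s ∧ c = ∑ i ∈ s, μ (w.get i).1 := by
  classical
  induction h with
  | nil => exact ⟨∅, rfl, by simp⟩
  | @keep x w v c _ ih =>
    obtain ⟨t, rfl, rfl⟩ := ih
    have ht : ∀ i : Fin w.length, i ∈ t ↔ Fin.succ i ∈ t.map (Fin.succEmb _) := by
      simp
    have h0 : (0 : Fin (w.length + 1)) ∉ t.map (Fin.succEmb _) := by simp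
    refine ⟨t.map (Fin.succEmb _), ?_, ?_⟩
    · rw [deleteSeq_cons x w _ t ht, if_neg h0]
    · rw [sum_cons x w _ t ht, if_neg h0, zero_add]
  | @drop x w v c _ ih =>
    obtain ⟨t, rfl, rfl⟩ := ih
    have ht : ∀ i : Fin w.length, i ∈ t ↔ Fin.succ i ∈ insert 0 (t.map (Fin.succEmb _)) := by
      simp
    have h0 : (0 : Fin (w.length + 1)) ∈ insert 0 (t.map (Fin.succEmb _)) := by simp
    refine ⟨insert (0 : Fin (w.length + 1)) (t.map (Fin.succEmb _)), ?_, ?_⟩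
    · rw [deleteSeq_cons x w _ t ht, if_pos h0]
    · rw [sum_cons x w _ t ht, if_pos h0]

theorem cancelCost_iff {w : List (α × Bool)} {c : ℝ} :
    CancelCost μ w c ↔ ∃ s : Finset (Fin w.length),
      FreeGroup.mk (deleteSeq w s) = 1 ∧ c = ∑ i ∈ s, μ (w.get i).1 := by
  constructor
  · rintro ⟨v, hd, hv⟩
    obtain ⟨s, rfl, rfl⟩ := hd.exists_finset
    exact ⟨s, hv, rfl⟩
  · rintro ⟨s, hs, rfl⟩
    exact ⟨_, deletes_deleteSeq w s, hs⟩

end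

/-- for `w ∈ F(A)` represented by a word `𝐰` in the alphabet `A ⊔ A⁻¹`,
the word norm `‖w‖_{F(A;μ)}` equals the minimum of `μ(𝐮)` over all cancellation
sequences `𝐮` in `𝐰`, and the minimum is attained (in particular the right-hand side
only depends on the element `w` represented by `𝐰`). -/
theorem freeGroup_cancellation_norm
    {α : Type*} (μ : α → ℝ) (hμ : ∀ a, 0 ≤ μ a)
    (w : List (α × Bool)) :
    IsLeast
      { x : ℝ | ∃ s : Finset (Fin w.length),
          FreeGroup.mk (deleteSeq w s) = 1 ∧
          x = ∑ i ∈ s, μ (w.get i).1 }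
      (wordNorm FreeGroup.of μ (FreeGroup.mk w)) := by
  set C := { x : ℝ | ∃ s : Finset (Fin w.length),
    FreeGroup.mk (deleteSeq w s) = 1 ∧ x = ∑ i ∈ s, μ (w.get i).1 } with hC
  have hmem : ∀ c, c ∈ C ↔ CancelCost μ w c := fun c => cancelCost_iff.symm
  have hfin : C.Finite :=
    (Set.finite_range fun s : Finset (Fin w.length) => ∑ i ∈ s, μ (w.get i).1).subset
      (by rintro x ⟨s, -, rfl⟩; exact ⟨s, rfl⟩)
  have hne : C.Nonempty := ⟨_, Finset.univ, by simp [deleteSeq, FreeGroup.one_eq_mk], rfl⟩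
  obtain ⟨m, hm, hmin⟩ := Set.exists_min_image C id hfin hne
  have hleast : IsLeast (wordNormSet FreeGroup.of μ (FreeGroup.mk w)) m := by
    constructor
    · obtain ⟨v, hd, hv⟩ := (hmem m).1 hm
      simpa [hv] using hd.mem_wordNormSet
    · rintro y ⟨l, hl, rfl⟩
      obtain ⟨w', hw', hc⟩ := exists_word_of_conj_list (μ := μ) l
      obtain ⟨c, hcy, hc⟩ := hc.of_mk_eq hμ (hw'.trans hl.symm)
      exact (hmin c ((hmem c).2 hc)).trans hcy
  rw [wordNorm, hleast.csInf_eq]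
  exact ⟨hm, fun c hc => hmin c hc⟩
end

section
/- Let A be a set with a length function μ, and for a positive integer d let ψ_d : F(A) → F(A) be the endomorphism of the free group determined by ψ_d(a) = a^d for all a ∈ A. Then for every g ∈ F(A), ‖ψ_d(g)‖_{F(A;μ)} = d·‖g‖_{F(A;μ)}. -/
/-- The endomorphism `ψ_d` of the free group `F(A)` determined by `ψ_d(a) = a^d`. -/
def psiD {α : Type*} (d : ℕ) : FreeGroup α →* FreeGroup α :=
  FreeGroup.lift (fun a => FreeGroup.of a ^ d)

namespace PsiD

open FreeGroup

variable {α : Type*}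

/-! ### Closure properties of the set of lengths of expressions -/

lemma zero_mem_one (μ : α → ℝ) : (0 : ℝ) ∈ wordNormSet FreeGroup.of μ (1 : FreeGroup α) :=
  ⟨[], by simp, by simp⟩

lemma add_mem_mul {μ : α → ℝ} {g h : FreeGroup α} {x y : ℝ}
    (hx : x ∈ wordNormSet FreeGroup.of μ g) (hy : y ∈ wordNormSet FreeGroup.of μ h) :
    x + y ∈ wordNormSet FreeGroup.of μ (g * h) := by
  obtain ⟨l, rfl, rfl⟩ := hx
  obtain ⟨m, rfl, rfl⟩ := hy
  exact ⟨l ++ m, by simp, by simp⟩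

lemma mem_conj {μ : α → ℝ} {g : FreeGroup α} {x : ℝ} (k : FreeGroup α)
    (hx : x ∈ wordNormSet FreeGroup.of μ g) :
    x ∈ wordNormSet FreeGroup.of μ (k * g * k⁻¹) := by
  obtain ⟨l, rfl, rfl⟩ := hx
  refine ⟨l.map fun p => (k * p.1, p.2), ?_, by simp [Function.comp_def]⟩
  rw [← MulAut.conj_apply, map_list_prod, List.map_map, List.map_map]
  congr 1
  apply List.map_congr_left
  intro p _
  simp [mul_assoc]

lemma mem_letter (μ : α → ℝ) (x : α × Bool) :
    μ x.1 ∈ wordNormSet FreeGroup.of μ (mk [x]) := by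
  obtain ⟨a, b⟩ := x
  refine ⟨[(1, a, b)], ?_, by simp⟩
  cases b
  · simp [FreeGroup.of, FreeGroup.invRev]
  · simp [FreeGroup.of]

lemma mul_mem_pow {μ : α → ℝ} {g : FreeGroup α} {x : ℝ} (n : ℕ)
    (hx : x ∈ wordNormSet FreeGroup.of μ g) :
    n * x ∈ wordNormSet FreeGroup.of μ (g ^ n) := by
  induction n with
  | zero => simpa using zero_mem_one μ
  | succ n ih =>
    have := add_mem_mul ih hx
    rw [pow_succ]
    convert this using 1
    push_cast
    ring

lemma mem_word (μ : α → ℝ) (L : List (α × Bool)) :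
    (L.map fun x => μ x.1).sum ∈ wordNormSet FreeGroup.of μ (mk L) := by
  induction L with
  | nil => exact zero_mem_one μ
  | cons x L ih =>
    have := add_mem_mul (mem_letter μ x) ih
    simpa using this

lemma nonempty_set (μ : α → ℝ) (g : FreeGroup α) :
    (wordNormSet FreeGroup.of μ g).Nonempty := by
  obtain ⟨L, rfl⟩ := Quot.exists_rep g
  exact ⟨_, mem_word μ L⟩

lemma nonneg_of_mem {μ : α → ℝ} (hμ : ∀ a, 0 ≤ μ a) {g : FreeGroup α} {x : ℝ}
    (hx : x ∈ wordNormSet FreeGroup.of μ g) : 0 ≤ x := by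
  obtain ⟨l, -, rfl⟩ := hx
  apply List.sum_nonneg
  intro y hy
  obtain ⟨p, -, rfl⟩ := List.mem_map.1 hy
  exact hμ _

lemma wordNorm_le {μ : α → ℝ} (hμ : ∀ a, 0 ≤ μ a) {g : FreeGroup α} {x : ℝ}
    (hx : x ∈ wordNormSet FreeGroup.of μ g) : wordNorm FreeGroup.of μ g ≤ x :=
  csInf_le ⟨0, fun _ hy => nonneg_of_mem hμ hy⟩ hx

/-- Each factor `k a k⁻¹` of an expression of `g` turns into `ψ(k) a^d ψ(k)⁻¹`, which costs
`d` times as much. -/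
lemma mul_mem_psiD {μ : α → ℝ} (d : ℕ) {g : FreeGroup α} {x : ℝ}
    (hx : x ∈ wordNormSet FreeGroup.of μ g) :
    d * x ∈ wordNormSet FreeGroup.of μ (psiD d g) := by
  obtain ⟨l, rfl, rfl⟩ := hx
  induction l with
  | nil => simpa using zero_mem_one μ
  | cons p l ih =>
    simp only [List.map_cons, List.prod_cons, List.sum_cons, _root_.map_mul, mul_add]
    refine add_mem_mul ?_ ih
    rw [_root_.map_inv]
    apply mem_conj
    obtain ⟨k, a, b⟩ := p
    have := mul_mem_pow d (mem_letter μ (a, b))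
    cases b
    · simpa [psiD, FreeGroup.of, FreeGroup.invRev] using this
    · simpa [psiD, FreeGroup.of] using this

/-! ### Deleting letters to make a word trivial -/

/-- The formal inverse of a letter. -/
def inv (x : α × Bool) : α × Bool := (x.1, !x.2)

lemma mk_inv (x : α × Bool) : mk [inv x] = (mk [x])⁻¹ := by
  simp [inv, FreeGroup.invRev]

lemma mk_cons' (x : α × Bool) (L : List (α × Bool)) : mk (x :: L) = mk [x] * mk L := by
  simp

lemma mk_append' (L M : List (α × Bool)) : mk (L ++ M) = mk L * mk M := by
  simp

lemma mk_eq_one_iff (L : List (α × Bool)) : mk L = 1 ↔ Red L [] := by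
  rw [one_eq_mk, FreeGroup.Red.exact]
  constructor
  · rintro ⟨M, h1, h2⟩
    rwa [Red.nil_iff.1 h2] at h1
  · intro h
    exact ⟨[], h, Red.refl⟩

lemma red_singleton {y : α × Bool} {l : List (α × Bool)} (h : Red l [y]) :
    ∃ s t, l = s ++ y :: t ∧ mk s = 1 ∧ mk t = 1 := by
  induction h using Relation.ReflTransGen.head_induction_on with
  | refl => exact ⟨[], [], by simp, rfl, rfl⟩
  | @head l m hstep _ ih =>
    obtain ⟨s, t, rfl, hs, ht⟩ := ih
    generalize hm : s ++ y :: t = m at hstep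
    obtain @⟨m1, m2, a, b⟩ := hstep
    rcases List.append_eq_append_iff.1 hm with ⟨as, rfl, h2⟩ | ⟨bs, rfl, h2⟩
    · cases as with
      | nil =>
        simp only [List.nil_append] at h2
        subst h2
        refine ⟨s ++ [(a, b), (a, !b)], t, by simp, ?_, ht⟩
        rw [← hs]
        have := @Red.Step.not _ s [] a b
        rw [List.append_nil] at this
        exact Quot.sound this
      | cons z as =>
        simp only [List.cons_append, List.cons.injEq] at h2
        obtain ⟨rfl, rfl⟩ := h2
        refine ⟨s, as ++ (a, b) :: (a, !b) :: m2, by simp, hs, ?_⟩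
        rw [← ht]
        exact Quot.sound Red.Step.not
    · subst h2
      refine ⟨m1 ++ (a, b) :: (a, !b) :: bs, t, by simp, ?_, ht⟩
      rw [← hs]
      exact Quot.sound Red.Step.not

/-- In a trivial word the first letter cancels against some later inverse letter, and the words
enclosed by and following this pair are trivial. -/
lemma trivial_cons {x : α × Bool} {l : List (α × Bool)} (h : mk (x :: l) = 1) :
    ∃ s t, l = s ++ inv x :: t ∧ mk s = 1 ∧ mk t = 1 :=
  red_singleton (Red.cons_nil_iff_singleton.1 ((mk_eq_one_iff _).1 h))

/-- The total length of the letters of a word. -/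
def wt (μ : α → ℝ) (L : List (α × Bool)) : ℝ := (L.map fun x => μ x.1).sum

@[simp] lemma wt_nil (μ : α → ℝ) : wt μ [] = 0 := by simp [wt]
@[simp] lemma wt_cons (μ : α → ℝ) (x L) : wt μ (x :: L) = μ x.1 + wt μ L := by simp [wt]
@[simp] lemma wt_append (μ : α → ℝ) (L M) : wt μ (L ++ M) = wt μ L + wt μ M := by simp [wt]

/-- In a trivial word, any given letter can be removed together with a matching inverse letter,
leaving a trivial word. -/
lemma trivial_remove (μ : α → ℝ) {y : α × Bool} {l₁ l₂ : List (α × Bool)}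
    (h : mk (l₁ ++ y :: l₂) = 1) :
    ∃ m₁ m₂, m₁.Sublist l₁ ∧ m₂.Sublist l₂ ∧ mk (m₁ ++ m₂) = 1 ∧
      wt μ m₁ + wt μ m₂ = wt μ l₁ + wt μ l₂ - μ y.1 := by
  have h' : mk (y :: (l₂ ++ l₁)) = 1 := by
    rw [← List.cons_append, mk_append']
    rw [mk_append'] at h
    exact mul_eq_one_comm.1 h
  obtain ⟨s, t, hst, hs, ht⟩ := trivial_cons h'
  rcases List.append_eq_append_iff.1 hst with ⟨as, rfl, h2⟩ | ⟨bs, rfl, h2⟩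
  · subst h2
    refine ⟨as ++ t, l₂, ?_, List.Sublist.refl _, ?_, ?_⟩
    · exact (List.Sublist.refl _).append (List.sublist_cons_self _ _)
    · rw [mk_append'] at hs
      have := mul_eq_one_comm.1 hs
      rw [mk_append', mk_append', ht, mul_one, this]
    · simp [inv]; ring
  · cases bs with
    | nil =>
      simp only [List.nil_append] at h2
      subst h2
      refine ⟨t, s, List.sublist_cons_self _ _, by simp, ?_, ?_⟩
      · rw [mk_append', hs, ht, one_mul]
      · simp [inv]; ring
    | cons z bs =>
      simp only [List.cons_append, List.cons.injEq] at h2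
      obtain ⟨rfl, rfl⟩ := h2
      refine ⟨l₁, s ++ bs, List.Sublist.refl _, ?_, ?_, ?_⟩
      · exact (List.Sublist.refl _).append (List.sublist_cons_self _ _)
      · rw [mk_append'] at ht
        have := mul_eq_one_comm.1 ht
        rw [mk_append', mk_append', hs, one_mul, this]
      · simp [inv]; ring

/-- Deleting letters of total length at most `c` from `L` can produce a trivial word. -/
def Killable (μ : α → ℝ) (L : List (α × Bool)) (c : ℝ) : Prop :=
  ∃ L', L'.Sublist L ∧ mk L' = 1 ∧ wt μ L ≤ wt μ L' + c

lemma Killable.of_step {μ : α → ℝ} {L M : List (α × Bool)} {c : ℝ}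
    (h : Red.Step L M) (hM : Killable μ M c) : Killable μ L c := by
  obtain @⟨m1, m2, a, b⟩ := h
  obtain ⟨L', hL', h1, hw⟩ := hM
  obtain ⟨k1, k2, rfl, hk1, hk2⟩ := List.sublist_append_iff.1 hL'
  refine ⟨k1 ++ (a, b) :: (a, !b) :: k2, hk1.append ((hk2.cons_cons _).cons_cons _), ?_, ?_⟩
  · rw [← h1]
    exact Quot.sound Red.Step.not
  · simp at hw ⊢
    linarith

/-- The only delicate case is that of a cancelling pair of which exactly one letter was deleted:
then the partner of the other letter is deleted instead. -/
lemma Killable.step {μ : α → ℝ} (hμ : ∀ a, 0 ≤ μ a) {L M : List (α × Bool)} {c : ℝ}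
    (h : Red.Step L M) (hL : Killable μ L c) : Killable μ M c := by
  obtain @⟨m1, m2, a, b⟩ := h
  obtain ⟨L', hL', h1, hw⟩ := hL
  obtain ⟨k1, k2, rfl, hk1, hk2⟩ := List.sublist_append_iff.1 hL'
  have ha := hμ a
  simp only [wt_append, wt_cons] at hw
  have key : ∀ (y : α × Bool) (k : List (α × Bool)), y.1 = a → k.Sublist m2 →
      mk (k1 ++ y :: k) = 1 → wt μ m1 + (μ a + (μ a + wt μ m2)) ≤
        wt μ k1 + (μ a + wt μ k) + c → Killable μ (m1 ++ m2) c := by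
    rintro y k rfl hk h hw
    obtain ⟨n1, n2, hn1, hn2, hn, hn'⟩ := trivial_remove μ h
    refine ⟨n1 ++ n2, (hn1.trans hk1).append (hn2.trans hk), hn, ?_⟩
    simp only [wt_append]
    linarith
  cases hk2 with
  | cons _ hk2 =>
    cases hk2 with
    | cons _ hk2 => exact ⟨k1 ++ k2, hk1.append hk2, h1, by simp only [wt_append]; linarith⟩
    | cons_cons _ hk2 => exact key _ _ rfl hk2 h1 (by simpa using hw)
  | cons_cons _ hk2 =>
    cases hk2 with
    | cons _ hk2 => exact key _ _ rfl hk2 h1 (by simpa using hw)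
    | @cons_cons k _ _ hk2 =>
      refine ⟨k1 ++ k, hk1.append hk2, ?_, ?_⟩
      · rw [← h1]
        exact (Quot.sound Red.Step.not).symm
      · simp only [wt_append, wt_cons] at hw ⊢
        linarith

lemma Killable.of_mk_eq {μ : α → ℝ} (hμ : ∀ a, 0 ≤ μ a) {L M : List (α × Bool)} {c : ℝ}
    (h : mk L = mk M) (hL : Killable μ L c) : Killable μ M c := by
  obtain ⟨R, h1, h2⟩ := FreeGroup.Red.exact.1 h
  clear h
  have hR : Killable μ R c := by
    clear h2
    induction h1 with
    | refl => exact hL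
    | tail _ hs ih => exact Killable.step hμ hs ih
  induction h2 using Relation.ReflTransGen.head_induction_on with
  | refl => exact hR
  | head hs _ ih => exact Killable.of_step hs ih

/-- In the word spelled out by an expression of `mk L`, deleting the generator in each conjugate
`k a k⁻¹` leaves a trivial word; the property then passes to `L`, which represents the same
element. -/
lemma killable_of_mem {μ : α → ℝ} (hμ : ∀ a, 0 ≤ μ a) {L : List (α × Bool)} {x : ℝ}
    (hx : x ∈ wordNormSet FreeGroup.of μ (mk L)) : Killable μ L x := by
  obtain ⟨l, hl, rfl⟩ := hx
  suffices h : ∃ M, mk M = (l.map fun p => p.1 * (if p.2.2 then FreeGroup.of p.2.1 else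
      (FreeGroup.of p.2.1)⁻¹) * p.1⁻¹).prod ∧ Killable μ M (l.map fun p => μ p.2.1).sum by
    obtain ⟨M, h1, h2⟩ := h
    exact Killable.of_mk_eq hμ (h1.trans hl.symm) h2
  clear hl
  induction l with
  | nil => exact ⟨[], rfl, [], by simp, rfl, by simp⟩
  | cons p l ih =>
    obtain ⟨M, h1, M', hs, h1', hw⟩ := ih
    obtain ⟨k, a, b⟩ := p
    obtain ⟨K, rfl⟩ := Quot.exists_rep k
    rw [quot_mk_eq_mk]
    have hk : mk (K ++ invRev K) = 1 := by rw [mk_append', ← inv_mk, mul_inv_cancel]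
    refine ⟨(K ++ (a, b) :: invRev K) ++ M, ?_, (K ++ invRev K) ++ M',
      ?_, ?_, ?_⟩
    · rw [mk_append', h1, List.map_cons, List.prod_cons, mk_append', mk_cons', ← inv_mk]
      cases b <;> simp [FreeGroup.of, FreeGroup.invRev, mul_assoc]
    · exact ((List.Sublist.refl _).append (List.sublist_cons_self _ _)).append hs
    · rw [mk_append', hk, h1', one_mul]
    · simp only [wt_append, wt_cons, List.map_cons, List.sum_cons]
      linarith

/-! ### Non-crossing matchings of the positions of a word -/

/-- `M` records a non-crossing partial matching of the entries of `l`, a list of positions with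
repetitions: for `p ≠ q` the number of matched pairs with positions `p` and `q` is
`M p q = M q p`, and `M p p` is the number of unmatched entries at position `p`. The letter at
position `p` is `f p`. -/
structure IsMatching {ι : Type*} [LinearOrder ι] [Fintype ι] (f : ι → α × Bool) (l : List ι)
    (M : ι → ι → ℕ) : Prop where
  symm : ∀ p q, M p q = M q p
  row : ∀ p, ∑ q, M p q = l.count p
  letter : ∀ p q, 0 < M p q → p ≠ q → f q = inv (f p)
  noncross : ∀ p q p' q', 0 < M p q → 0 < M p' q' → p < p' → p' < q → q < q' → False

section

variable {ι : Type*} [LinearOrder ι] [Fintype ι] {f : ι → α × Bool}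

lemma IsMatching.mem_left {l : List ι} {M : ι → ι → ℕ} (h : IsMatching f l M) {p q : ι}
    (hpq : 0 < M p q) : p ∈ l := by
  rw [← List.count_pos_iff, ← h.row p]
  exact lt_of_lt_of_le hpq (Finset.single_le_sum (f := fun q => M p q) (by simp) (Finset.mem_univ q))

lemma IsMatching.mem_right {l : List ι} {M : ι → ι → ℕ} (h : IsMatching f l M) {p q : ι}
    (hpq : 0 < M p q) : q ∈ l :=
  h.mem_left (by rwa [h.symm])

lemma inv_ne (x : α × Bool) : inv x ≠ x := by
  intro h
  have := congrArg Prod.snd h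
  simp [inv] at this

lemma inv_inv' (x : α × Bool) : inv (inv x) = x := by
  simp [inv]

lemma IsMatching.unmatched {l : List ι} {M : ι → ι → ℕ} (h : IsMatching f l M) (p : ι) :
    IsMatching f (p :: l) (fun i j => M i j + if i = p ∧ j = p then 1 else 0) where
  symm i j := by rw [h.symm i j]; simp only [and_comm]
  row i := by
    rw [Finset.sum_add_distrib, h.row, List.count_cons]
    by_cases hi : i = p
    · subst hi; simp
    · simp [hi, Ne.symm hi]
  letter i j := by
    intro h1 h2
    have : ¬ (i = p ∧ j = p) := by rintro ⟨rfl, rfl⟩; exact h2 rfl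
    simp only [this, if_false, add_zero] at h1
    exact h.letter i j h1 h2
  noncross i j i' j' := by
    intro h1 h2 h3 h4 h5
    have e1 : ¬ (i = p ∧ j = p) := by
      rintro ⟨rfl, rfl⟩; exact absurd (h3.trans h4) (lt_irrefl _)
    have e2 : ¬ (i' = p ∧ j' = p) := by
      rintro ⟨rfl, rfl⟩; exact absurd (h4.trans h5) (lt_irrefl _)
    simp only [e1, e2, if_false, add_zero] at h1 h2
    exact h.noncross _ _ _ _ h1 h2 h3 h4 h5

lemma IsMatching.pair {u v : List ι} {M N : ι → ι → ℕ} (hM : IsMatching f u M)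
    (hN : IsMatching f v N) {p q : ι} (hpq : f q = inv (f p))
    (hs : (p :: (u ++ q :: v)).Pairwise (· ≤ ·)) :
    IsMatching f (p :: (u ++ q :: v)) (fun i j => M i j + N i j +
      ((if i = p ∧ j = q then 1 else 0) + if i = q ∧ j = p then 1 else 0)) where
  symm i j := by
    rw [hM.symm i j, hN.symm i j, add_comm (ite _ _ _)]; simp only [and_comm]
  row i := by
    have hne : p ≠ q := by rintro rfl; exact inv_ne _ hpq.symm
    simp only [Finset.sum_add_distrib, hM.row, hN.row, List.count_cons, List.count_append, ite_and]
    by_cases hi : i = p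
    · subst hi; simp [hne, hne.symm]; try ring
    · by_cases hi' : i = q
      · subst hi'; simp [hi, Ne.symm hi]; try ring
      · simp [hi, Ne.symm hi, hi', Ne.symm hi']
  letter i j := by
    intro h1 h2
    by_cases e1 : i = p ∧ j = q
    · obtain ⟨rfl, rfl⟩ := e1; exact hpq
    by_cases e2 : i = q ∧ j = p
    · obtain ⟨rfl, rfl⟩ := e2; rw [hpq, inv_inv']
    simp only [e1, e2, if_false, add_zero] at h1
    rcases Nat.add_pos_iff_pos_or_pos.1 h1 with h | h
    · exact hM.letter i j h h2
    · exact hN.letter i j h h2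
  noncross := by
    -- All pairs of `M` lie in `[p, q]` and all pairs of `N` in `[q, ∞)`.
    have hMb : ∀ i j, 0 < M i j → p ≤ i ∧ i ≤ q ∧ p ≤ j ∧ j ≤ q := by
      intro i j h
      have h1 := hM.mem_left h
      have h2 := hM.mem_right h
      simp only [List.pairwise_cons, List.pairwise_append, List.mem_append, List.mem_cons] at hs
      exact ⟨hs.1 _ (.inl h1), hs.2.2.2 _ h1 _ (.inl rfl), hs.1 _ (.inl h2),
        hs.2.2.2 _ h2 _ (.inl rfl)⟩
    have hNb : ∀ i j, 0 < N i j → q ≤ i ∧ q ≤ j := by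
      intro i j h
      have h1 := hN.mem_left h
      have h2 := hN.mem_right h
      simp only [List.pairwise_cons, List.pairwise_append, List.mem_append, List.mem_cons] at hs
      exact ⟨hs.2.2.1.1 _ h1, hs.2.2.1.1 _ h2⟩
    have hpq' : p ≤ q := by
      simp only [List.pairwise_cons, List.mem_append, List.mem_cons] at hs
      exact hs.1 _ (.inr (.inl rfl))
    have hcases : ∀ i j, 0 < M i j + N i j +
        ((if i = p ∧ j = q then 1 else 0) + if i = q ∧ j = p then 1 else 0) →
        0 < M i j ∨ 0 < N i j ∨ (i = p ∧ j = q) ∨ (i = q ∧ j = p) := by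
      intro i j h
      by_contra! hc
      obtain ⟨c1, c2, c3, c4⟩ := hc
      have c3' : ¬ (i = p ∧ j = q) := fun h => c3 h.1 h.2
      have c4' : ¬ (i = q ∧ j = p) := fun h => c4 h.1 h.2
      simp only [c3', c4', if_false] at h
      omega
    intro i j i' j' h1 h2 h3 h4 h5
    rcases hcases _ _ h1 with h1 | h1 | ⟨rfl, rfl⟩ | ⟨rfl, rfl⟩ <;>
    rcases hcases _ _ h2 with h2 | h2 | ⟨rfl, rfl⟩ | ⟨rfl, rfl⟩
    · exact hM.noncross _ _ _ _ h1 h2 h3 h4 h5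
    all_goals first
      | exact hN.noncross _ _ _ _ h1 h2 h3 h4 h5
      | (try have a1 := hMb _ _ h1)
        (try have a2 := hMb _ _ h2)
        (try have a3 := hNb _ _ h1)
        (try have a4 := hNb _ _ h2)
        grind

/-- A trivial subword of a word yields a non-crossing matching whose unmatched letters are, up to
total length, the deleted ones. -/
lemma exists_matching (μ : α → ℝ) (n : ℕ) : ∀ (l l' : List ι), l.length ≤ n →
    l.Pairwise (· ≤ ·) → l'.Sublist l → mk (l'.map f) = 1 →
    ∃ M, IsMatching f l M ∧
      ∑ p, (M p p : ℝ) * μ (f p).1 + wt μ (l'.map f) = wt μ (l.map f) := by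
  induction n with
  | zero =>
    intro l l' hl _ hl' _
    obtain rfl : l = [] := List.length_eq_zero_iff.1 (by omega)
    obtain rfl : l' = [] := by simpa using hl'
    exact ⟨fun _ _ => 0, ⟨by simp, by simp, by simp, by simp⟩, by simp⟩
  | succ n ih =>
    intro l l' hl hs hl' h1
    cases hl' with
    | slnil => exact ⟨fun _ _ => 0, ⟨by simp, by simp, by simp, by simp⟩, by simp⟩
    | @cons _ r p hr =>
      obtain ⟨M, hM, hc⟩ := ih r l' (by simpa using hl) hs.of_cons hr h1
      refine ⟨_, hM.unmatched p, ?_⟩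
      simp [add_mul, Finset.sum_add_distrib]
      linarith
    | @cons_cons r' r p hr =>
      rw [List.map_cons] at h1
      obtain ⟨s, t, hst, h1s, h1t⟩ := trivial_cons h1
      obtain ⟨s', t', rfl, rfl, ht⟩ := List.map_eq_append_iff.1 hst
      obtain ⟨q, t', rfl, hq, rfl⟩ := List.map_eq_cons_iff.1 ht
      obtain ⟨r₁, r₂, rfl, hr₁, hr₂⟩ := List.append_sublist_iff.1 hr
      obtain ⟨r₃, r₄, rfl, hq', hr₄⟩ := List.cons_sublist_iff.1 hr₂
      obtain ⟨r₅, r₆, rfl⟩ := List.append_of_mem hq'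
      have e : r₁ ++ ((r₅ ++ q :: r₆) ++ r₄) = (r₁ ++ r₅) ++ q :: (r₆ ++ r₄) := by simp
      rw [e] at hs hl ⊢
      simp only [List.length_cons, List.length_append] at hl
      have hs1 : (r₁ ++ r₅).Pairwise (· ≤ ·) := (List.pairwise_append.1 hs.of_cons).1
      have hs2 : (r₆ ++ r₄).Pairwise (· ≤ ·) := (List.pairwise_append.1 hs.of_cons).2.1.of_cons
      obtain ⟨M, hM, hMc⟩ := ih (r₁ ++ r₅) s' (by simp; omega) hs1
        (hr₁.trans (List.sublist_append_left _ _)) h1s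
      obtain ⟨N, hN, hNc⟩ := ih (r₆ ++ r₄) t' (by simp; omega) hs2
        (hr₄.trans (List.sublist_append_right _ _)) h1t
      refine ⟨_, hM.pair hN hq hs, ?_⟩
      have hne : p ≠ q := by rintro rfl; exact inv_ne _ hq.symm
      have z1 : ∀ i, ¬ (i = p ∧ i = q) := by rintro i ⟨rfl, h⟩; exact hne h
      have z2 : ∀ i, ¬ (i = q ∧ i = p) := by rintro i ⟨rfl, h⟩; exact hne h.symm
      simp only [z1, z2, if_false, add_zero, Nat.cast_add, add_mul, Finset.sum_add_distrib,
        List.map_cons, List.map_append, wt_cons, wt_append] at hMc hNc ⊢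
      linarith

/-- Averaging step: Birkhoff's theorem, applied to the matrix `M / d`, yields a permutation
supported on `M` whose fixed points have total weight at most the average. -/
lemma exists_perm {M : ι → ι → ℕ} {d : ℕ} (hd : 0 < d) (hsymm : ∀ p q, M p q = M q p)
    (hrow : ∀ p, ∑ q, M p q = d) (c : ι → ℝ) :
    ∃ σ : Equiv.Perm ι, (∀ p, 0 < M p (σ p)) ∧
      d * ∑ p, (if σ p = p then c p else 0) ≤ ∑ p, (M p p : ℝ) * c p := by
  have hd' : (0 : ℝ) < d := by exact_mod_cast hd
  have hrow' : ∀ p, ∑ q, (M p q : ℝ) / d = 1 := by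
    intro p
    rw [← Finset.sum_div, div_eq_one_iff_eq hd'.ne']
    exact_mod_cast hrow p
  have hmem : (Matrix.of fun p q => (M p q : ℝ) / d) ∈ doublyStochastic ℝ ι := by
    rw [mem_doublyStochastic_iff_sum]
    refine ⟨fun i j => ?_, hrow', fun j => ?_⟩
    · simp only [Matrix.of_apply]; positivity
    · simp only [Matrix.of_apply, hsymm _ j]; exact hrow' j
  obtain ⟨w, hw0, hw1, hw⟩ := exists_eq_sum_perm_of_mem_doublyStochastic hmem
  have hentry : ∀ p q, ∑ σ : Equiv.Perm ι, w σ * (if σ p = q then 1 else 0) = (M p q : ℝ) / d := by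
    intro p q
    have := congrFun (congrFun hw p) q
    simpa [Matrix.sum_apply, PEquiv.toMatrix_apply, Equiv.toPEquiv_apply, eq_comm] using this
  have hsupp : ∀ σ, 0 < w σ → ∀ p, 0 < M p (σ p) := by
    intro σ hσ p
    have h1 : w σ * (if σ p = σ p then 1 else 0) ≤ (M p (σ p) : ℝ) / d := by
      rw [← hentry]
      refine Finset.single_le_sum (f := fun σ' : Equiv.Perm ι =>
        w σ' * (if σ' p = σ p then (1 : ℝ) else 0)) (fun σ' _ => ?_) (Finset.mem_univ σ)
      have := hw0 σ'
      split_ifs <;> simp [this]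
    rw [if_pos rfl, mul_one] at h1
    have h2 : (0 : ℝ) < (M p (σ p) : ℝ) / d := hσ.trans_le h1
    by_contra h3
    have : M p (σ p) = 0 := by omega
    simp [this] at h2
  have havg : ∑ σ : Equiv.Perm ι, w σ * (d * ∑ p, (if σ p = p then c p else 0)) =
      ∑ p, (M p p : ℝ) * c p := by
    simp only [Finset.mul_sum]
    rw [Finset.sum_comm]
    refine Finset.sum_congr rfl fun p _ => ?_
    have : (M p p : ℝ) = d * ∑ σ : Equiv.Perm ι, w σ * (if σ p = p then 1 else 0) := by
      rw [hentry]; field_simp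
    rw [this, Finset.mul_sum, Finset.sum_mul]
    refine Finset.sum_congr rfl fun σ _ => ?_
    split_ifs <;> ring
  by_contra! hcon
  have hlt : ∑ σ : Equiv.Perm ι, w σ * ∑ p, (M p p : ℝ) * c p <
      ∑ σ : Equiv.Perm ι, w σ * (d * ∑ p, (if σ p = p then c p else 0)) := by
    have hex : ∃ σ, 0 < w σ := by
      by_contra! h
      have : ∑ σ, w σ ≤ 0 := Finset.sum_nonpos fun σ _ => h σ
      linarith
    obtain ⟨σ₀, hσ₀⟩ := hex
    refine Finset.sum_lt_sum (fun σ _ => ?_) ⟨σ₀, Finset.mem_univ _, ?_⟩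
    · rcases (hw0 σ).eq_or_lt with h | h
      · simp [← h]
      · exact mul_le_mul_of_nonneg_left (hcon σ (hsupp σ h)).le h.le
    · exact mul_lt_mul_of_pos_left (hcon σ₀ (hsupp σ₀ hσ₀)) hσ₀
  rw [havg, ← Finset.sum_mul, hw1, one_mul] at hlt
  exact lt_irrefl _ hlt

end

/-- A non-crossing involution pairing positions with mutually inverse letters shows that the
total length of the letters at its fixed points is attained by an expression of the word. -/
lemma mem_of_involution {ι : Type*} [LinearOrder ι] {f : ι → α × Bool} (μ : α → ℝ)
    {τ : ι → ι} (hτ : ∀ p, τ (τ p) = p)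
    (hlet : ∀ p, τ p ≠ p → f (τ p) = inv (f p))
    (hnc : ∀ p p', p < p' → p' < τ p → τ p < τ p' → False) (n : ℕ) :
    ∀ l : List ι, l.length ≤ n → l.Pairwise (· < ·) → (∀ p ∈ l, τ p ∈ l) →
      (l.map fun p => if τ p = p then μ (f p).1 else 0).sum ∈
        wordNormSet FreeGroup.of μ (mk (l.map f)) := by
  induction n with
  | zero =>
    intro l hl _ _
    obtain rfl : l = [] := List.length_eq_zero_iff.1 (by omega)
    exact zero_mem_one μ
  | succ n ih =>
    intro l hl hs hcl
    cases l with
    | nil => exact zero_mem_one μ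
    | cons p r =>
      have hp := (List.pairwise_cons.1 hs).1
      have hinj : ∀ {a b}, τ a = τ b → a = b := fun {a b} h => by rw [← hτ a, h, hτ]
      by_cases hpp : τ p = p
      · have := ih r (by simpa using hl) hs.of_cons (by
          intro x hx
          rcases List.mem_cons.1 (hcl x (List.mem_cons_of_mem _ hx)) with h | h
          · have := hp x hx
            rw [hinj (h.trans hpp.symm)] at this
            exact absurd this (lt_irrefl _)
          · exact h)
        rw [List.map_cons, List.map_cons, List.sum_cons, if_pos hpp, mk_cons']
        exact add_mem_mul (mem_letter μ _) this
      · have hq : τ p ∈ r := by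
          rcases List.mem_cons.1 (hcl p List.mem_cons_self) with h | h
          · exact absurd h hpp
          · exact h
        obtain ⟨u, v, rfl⟩ := List.append_of_mem hq
        have hs' := List.pairwise_append.1 hs.of_cons
        have hv := (List.pairwise_cons.1 hs'.2.1).1
        have huq : ∀ x ∈ u, x < τ p := fun x hx => hs'.2.2 x hx _ List.mem_cons_self
        simp only [List.mem_append, List.mem_cons] at hp hcl
        simp only [List.length_cons, List.length_append] at hl
        have hu : ∀ x ∈ u, τ x ∈ u := by
          intro x hx
          have hpx := hp x (.inl hx)
          rcases hcl x (.inr (.inl hx)) with h | h | h | h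
          · have := huq x hx
            rw [← h, hτ] at this
            exact absurd this (lt_irrefl _)
          · exact h
          · exact absurd (hinj h) hpx.ne'
          · exact (hnc p x hpx (huq x hx) (hv _ h)).elim
        have hv' : ∀ x ∈ v, τ x ∈ v := by
          intro x hx
          have hpx := hp x (.inr (.inr hx))
          rcases hcl x (.inr (.inr (.inr hx))) with h | h | h | h
          · have := hv x hx
            rw [← h, hτ] at this
            exact absurd this (lt_irrefl _)
          · refine (hnc p (τ x) (hp _ (.inl h)) (huq _ h) ?_).elim
            rw [hτ]
            exact hv x hx
          · exact absurd (hinj h) hpx.ne'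
          · exact h
        have h1 := ih u (by omega) hs'.1 hu
        have h2 := ih v (by omega) hs'.2.1.of_cons hv'
        have h3 := add_mem_mul (mem_conj (mk [f p]) h1) h2
        have hqq : ¬ p = τ p := fun h => hpp h.symm
        rw [List.map_cons, List.map_cons, List.sum_cons, if_neg hpp, List.map_append,
          List.map_append, List.sum_append, List.map_cons, List.map_cons, List.sum_cons, hτ,
          if_neg hqq, mk_cons', mk_append', mk_cons' (f (τ p)), hlet p hpp, mk_inv]
        simpa [mul_assoc] using h3

/-! ### The lower bound -/

lemma psiD_letter (d : ℕ) (x : α × Bool) : psiD d (mk [x]) = mk [x] ^ d := by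
  obtain ⟨a, b⟩ := x
  cases b
  · have : mk [(a, false)] = (FreeGroup.of a)⁻¹ := by simp [FreeGroup.of, FreeGroup.invRev]
    rw [this, _root_.map_inv, psiD, FreeGroup.lift_apply_of, inv_pow]
  · exact FreeGroup.lift_apply_of

lemma mk_replicate (d : ℕ) (x : α × Bool) : mk (List.replicate d x) = mk [x] ^ d := by
  induction d with
  | zero => rfl
  | succ d ih => rw [List.replicate_succ, mk_cons', ih, pow_succ']

lemma mk_flatMap {ι : Type*} (f : ι → α × Bool) (d : ℕ) (l : List ι) :
    mk ((l.flatMap fun p => List.replicate d p).map f) = psiD d (mk (l.map f)) := by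
  induction l with
  | nil => exact (_root_.map_one _).symm
  | cons p l ih =>
    rw [List.flatMap_cons, List.map_append, mk_append', ih, List.map_cons, mk_cons' (f p),
      _root_.map_mul, psiD_letter, List.map_replicate, mk_replicate]

lemma sorted_flatMap {ι : Type*} [LinearOrder ι] (d : ℕ) {l : List ι} (h : l.Pairwise (· < ·)) :
    (l.flatMap fun p => List.replicate d p).Pairwise (· ≤ ·) := by
  induction l with
  | nil => simp
  | cons p l ih =>
    rw [List.flatMap_cons, List.pairwise_append]
    refine ⟨by simp [List.pairwise_replicate], ih h.of_cons, ?_⟩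
    intro a ha b hb
    obtain rfl := List.eq_of_mem_replicate ha
    obtain ⟨q, hq, hb⟩ := List.mem_flatMap.1 hb
    obtain rfl := List.eq_of_mem_replicate hb
    exact ((List.pairwise_cons.1 h).1 _ hq).le

lemma count_flatMap {ι : Type*} [DecidableEq ι] (d : ℕ) (l : List ι) (p : ι) :
    (l.flatMap fun p => List.replicate d p).count p = d * l.count p := by
  induction l with
  | nil => simp
  | cons q l ih =>
    rw [List.flatMap_cons, List.count_append, ih, List.count_replicate, List.count_cons]
    by_cases h : q = p
    · simp [h]; ring
    · simp [h]

/-- Repeating each letter of a word for `g` `d` times gives a word for `ψ_d(g)`. A matching of the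
latter has multiplicities `M` with row sums `d`, from which `exists_perm` extracts a matching of
the original word. -/
lemma le_of_mem_psiD {μ : α → ℝ} (hμ : ∀ a, 0 ≤ μ a) {d : ℕ} (hd : 0 < d) {g : FreeGroup α}
    {x : ℝ} (hx : x ∈ wordNormSet FreeGroup.of μ (psiD d g)) :
    d * wordNorm FreeGroup.of μ g ≤ x := by
  obtain ⟨L, rfl⟩ := Quot.exists_rep g
  rw [quot_mk_eq_mk] at hx ⊢
  set f : Fin L.length → α × Bool := L.get with hf
  have hL : L = (List.finRange L.length).map f := (List.map_get_finRange L).symm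
  have hsort : (List.finRange L.length).Pairwise (· < ·) := List.pairwise_lt_finRange _
  set l := (List.finRange L.length).flatMap fun p => List.replicate d p with hl
  have hmk : mk (l.map f) = psiD d (mk L) := by
    rw [hl, mk_flatMap, ← hL]
  rw [← hmk] at hx
  obtain ⟨L', hsub, h1, hw⟩ := killable_of_mem hμ hx
  obtain ⟨l', hl', rfl⟩ := List.sublist_map_iff.1 hsub
  obtain ⟨M, hM, hc⟩ := exists_matching (f := f) μ l.length l l' le_rfl
    (sorted_flatMap d hsort) hl' h1
  have hrow : ∀ p, ∑ q, M p q = d := by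
    intro p
    rw [hM.row, hl, count_flatMap,
      List.count_eq_one_of_mem (List.nodup_finRange _) (List.mem_finRange p), mul_one]
  obtain ⟨σ, hσ, hcost⟩ := exists_perm hd hM.symm hrow fun p => μ (f p).1
  have hσ' : ∀ p, 0 < M p (σ⁻¹ p) := by
    intro p
    have := hσ (σ⁻¹ p)
    rwa [show σ (σ⁻¹ p) = p from σ.apply_symm_apply p, hM.symm] at this
  -- `τ` follows `σ` at positive letters and `σ⁻¹` at negative ones, so it is an involution.
  let τ : Fin L.length → Fin L.length := fun p => if (f p).2 then σ p else σ⁻¹ p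
  have hτM : ∀ p, 0 < M p (τ p) := by
    intro p
    dsimp only [τ]
    split_ifs
    exacts [hσ p, hσ' p]
  have hlet : ∀ p, τ p ≠ p → f (τ p) = inv (f p) := fun p hp =>
    hM.letter p (τ p) (hτM p) hp.symm
  have hfix : ∀ p, τ p = p ↔ σ p = p := by
    intro p
    dsimp only [τ]
    split_ifs
    · rfl
    · rw [Equiv.Perm.inv_eq_iff_eq, eq_comm]
  have hττ : ∀ p, τ (τ p) = p := by
    intro p
    by_cases hp : τ p = p
    · rw [hp, hp]
    · have h2 : (f (τ p)).2 = !(f p).2 := by rw [hlet p hp]; rfl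
      change (if (f (τ p)).2 then σ (τ p) else σ⁻¹ (τ p)) = p
      rw [h2]
      dsimp only [τ]
      cases (f p).2 <;> simp
  have hnc : ∀ p p', p < p' → p' < τ p → τ p < τ p' → False := fun p p' =>
    hM.noncross p (τ p) p' (τ p') (hτM p) (hτM p')
  have hmem := mem_of_involution (f := f) μ hττ hlet hnc _ (List.finRange L.length) le_rfl hsort
    fun p _ => List.mem_finRange _
  rw [← hL] at hmem
  have hsum : ((List.finRange L.length).map fun p => if τ p = p then μ (f p).1 else 0).sum =
      ∑ p, if σ p = p then μ (f p).1 else 0 := by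
    simp only [hfix]
    exact (Fin.sum_univ_def _).symm
  rw [hsum] at hmem
  calc (d : ℝ) * wordNorm FreeGroup.of μ (mk L)
      ≤ d * ∑ p, (if σ p = p then μ (f p).1 else 0) := by
        gcongr
        exact wordNorm_le hμ hmem
    _ ≤ ∑ p, (M p p : ℝ) * μ (f p).1 := hcost
    _ ≤ x := by linarith

end PsiD

/-- for every positive integer `d` and every `g ∈ F(A)`,
`‖ψ_d(g)‖_{F(A;μ)} = d · ‖g‖_{F(A;μ)}`. -/
theorem psiD_wordNorm
    {α : Type*} (μ : α → ℝ) (hμ : ∀ a, 0 ≤ μ a)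
    (d : ℕ) (hd : 0 < d) (g : FreeGroup α) :
    wordNorm FreeGroup.of μ (psiD d g) = (d : ℝ) * wordNorm FreeGroup.of μ g := by
  have hd' : (0 : ℝ) < d := by exact_mod_cast hd
  apply le_antisymm
  · rw [← div_le_iff₀' hd']
    refine le_csInf (PsiD.nonempty_set μ g) fun y hy => ?_
    rw [div_le_iff₀' hd']
    exact PsiD.wordNorm_le hμ (PsiD.mul_mem_psiD d hy)
  · exact le_csInf (PsiD.nonempty_set μ _) fun x hx => PsiD.le_of_mem_psiD hμ hd hx
end

section
/- Let A be a set with a length function μ and for t ∈ ℝ let ψ_t : F_ℝ(A) → F_ℝ(A) be the homomorphism determined by ψ_t(a(r)) = a(tr). Then: (a) for every w ∈ F_ℝ(A) and every t ∈ ℝ, ‖ψ_t(w)‖_{F_ℝ(A;μ)} = |t|·‖w‖_{F_ℝ(A;μ)}; (b) for every w ∈ F_ℝ(A) there exists a constant C_w ≥ 0 such that ‖ψ_s(w)⁻¹ψ_t(w)‖_{F_ℝ(A;μ)} ≤ C_w·|s−t| for all s,t ∈ ℝ. -/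
/-- `F_ℝ(A)`: the free product of copies of `ℝ` indexed by `A`. -/
abbrev FR (A : Type*) : Type _ := Monoid.CoprodI (fun _ : A => Multiplicative ℝ)

/-- The generator `a(r)` of `F_ℝ(A)`. -/
def genFR (A : Type*) (p : A × ℝ) : FR A :=
  Monoid.CoprodI.of (i := p.1) (Multiplicative.ofAdd p.2)

/-- The conjugation-invariant word norm `‖·‖_{F_ℝ(A;μ)}`. -/
noncomputable def FRnorm {A : Type*} (μ : A → ℝ) : FR A → ℝ :=
  wordNorm (genFR A) (fun p => |p.2| * μ p.1)

/-- Multiplication by `t` as an endomorphism of the group `Multiplicative ℝ`. -/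
def scaleHom (t : ℝ) : Multiplicative ℝ →* Multiplicative ℝ where
  toFun x := Multiplicative.ofAdd (t * Multiplicative.toAdd x)
  map_one' := by simp
  map_mul' x y := by
    simp [toAdd_mul, mul_add, ofAdd_add]

/-- The endomorphism `ψ_t` of `F_ℝ(A)` determined by `ψ_t(a(r)) = a(tr)`. -/
noncomputable def psiT {A : Type*} (t : ℝ) : FR A →* FR A :=
  Monoid.CoprodI.lift (fun a =>
    (Monoid.CoprodI.of (M := fun _ : A => Multiplicative ℝ) (i := a)).comp (scaleHom t))

section WordNorm

variable {G : Type*} [Group G] {I : Type*} {gen : I → G} {ℓ : I → ℝ}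

lemma zero_mem_wordNormSet_one : (0 : ℝ) ∈ wordNormSet gen ℓ 1 := ⟨[], by simp, by simp⟩

lemma length_mem_wordNormSet_gen (i : I) : ℓ i ∈ wordNormSet gen ℓ (gen i) :=
  ⟨[(1, i, true)], by simp, by simp⟩

lemma add_mem_wordNormSet_mul {g h : G} {x y : ℝ} (hx : x ∈ wordNormSet gen ℓ g)
    (hy : y ∈ wordNormSet gen ℓ h) : x + y ∈ wordNormSet gen ℓ (g * h) := by
  obtain ⟨l, rfl, rfl⟩ := hx
  obtain ⟨m, rfl, rfl⟩ := hy
  exact ⟨l ++ m, by simp, by simp⟩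

lemma mem_wordNormSet_conj {g : G} {x : ℝ} (k : G) (hx : x ∈ wordNormSet gen ℓ g) :
    x ∈ wordNormSet gen ℓ (k * g * k⁻¹) := by
  obtain ⟨l, rfl, rfl⟩ := hx
  refine ⟨l.map fun p => (k * p.1, p.2), ?_, by simp [Function.comp_def]⟩
  rw [← MulAut.conj_apply, map_list_prod]
  simp only [List.map_map]
  congr 2
  funext p
  simp [mul_assoc]

lemma nonneg_of_mem_wordNormSet (hℓ : ∀ i, 0 ≤ ℓ i) {g : G} {x : ℝ}
    (hx : x ∈ wordNormSet gen ℓ g) : 0 ≤ x := by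
  obtain ⟨l, -, rfl⟩ := hx
  apply List.sum_nonneg
  simp only [List.mem_map]
  rintro _ ⟨p, -, rfl⟩
  exact hℓ _

lemma bddBelow_wordNormSet (hℓ : ∀ i, 0 ≤ ℓ i) (g : G) : BddBelow (wordNormSet gen ℓ g) :=
  ⟨0, fun _ hx => nonneg_of_mem_wordNormSet hℓ hx⟩

end WordNorm

section FreeProduct

variable {A : Type*} {μ : A → ℝ}

lemma psiT_genFR (t : ℝ) (p : A × ℝ) : psiT t (genFR A p) = genFR A (p.1, t * p.2) := by
  simp [psiT, genFR, scaleHom]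

lemma psiT_inv_psiT {t : ℝ} (ht : t ≠ 0) (w : FR A) : psiT t⁻¹ (psiT t w) = w := by
  induction w using Monoid.CoprodI.induction_on with
  | one => simp
  | of a r =>
    change psiT t⁻¹ (psiT t (genFR A (a, r.toAdd))) = genFR A (a, r.toAdd)
    simp [psiT_genFR, ht]
  | mul x y hx hy => simp [hx, hy]

/-- The word norm set of `F_ℝ(A)` is never empty, so `FRnorm` is a genuine infimum. -/
lemma wordNormSet_nonempty (μ : A → ℝ) (w : FR A) :
    (wordNormSet (genFR A) (fun p => |p.2| * μ p.1) w).Nonempty := by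
  induction w using Monoid.CoprodI.induction_on with
  | one => exact ⟨0, zero_mem_wordNormSet_one⟩
  | of a r => exact ⟨_, length_mem_wordNormSet_gen (gen := genFR A) (a, r.toAdd)⟩
  | mul x y hx hy =>
    obtain ⟨c, hc⟩ := hx
    obtain ⟨d, hd⟩ := hy
    exact ⟨c + d, add_mem_wordNormSet_mul hc hd⟩

lemma mem_wordNormSet_psiT (t : ℝ) {w : FR A} {x : ℝ}
    (hx : x ∈ wordNormSet (genFR A) (fun p => |p.2| * μ p.1) w) :
    |t| * x ∈ wordNormSet (genFR A) (fun p => |p.2| * μ p.1) (psiT t w) := by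
  obtain ⟨l, rfl, rfl⟩ := hx
  refine ⟨l.map fun p => (psiT t p.1, (p.2.1.1, t * p.2.1.2), p.2.2), ?_, ?_⟩
  · rw [map_list_prod]
    simp only [List.map_map]
    congr 2
    funext p
    obtain ⟨g, i, b⟩ := p
    cases b <;> simp [psiT_genFR]
  · rw [← List.sum_map_mul_left]
    simp [Function.comp_def, abs_mul, mul_assoc]

lemma length_nonneg (hμ : ∀ a, 0 ≤ μ a) (p : A × ℝ) : 0 ≤ |p.2| * μ p.1 :=
  mul_nonneg (abs_nonneg _) (hμ _)

lemma FRnorm_le_of_mem (hμ : ∀ a, 0 ≤ μ a) {w : FR A} {x : ℝ}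
    (hx : x ∈ wordNormSet (genFR A) (fun p => |p.2| * μ p.1) w) : FRnorm μ w ≤ x :=
  csInf_le (bddBelow_wordNormSet (length_nonneg hμ) w) hx

lemma FRnorm_nonneg (hμ : ∀ a, 0 ≤ μ a) (w : FR A) : 0 ≤ FRnorm μ w :=
  Real.sInf_nonneg fun _ hx => nonneg_of_mem_wordNormSet (length_nonneg hμ) hx

lemma FRnorm_psiT_le (hμ : ∀ a, 0 ≤ μ a) (t : ℝ) (w : FR A) :
    FRnorm μ (psiT t w) ≤ |t| * FRnorm μ w := by
  rw [FRnorm, wordNorm, wordNorm, ← smul_eq_mul, ← Real.sInf_smul_of_nonneg (abs_nonneg t)]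
  refine csInf_le_csInf (bddBelow_wordNormSet (length_nonneg hμ) _)
    ((wordNormSet_nonempty μ w).image _) ?_
  rintro _ ⟨x, hx, rfl⟩
  exact mem_wordNormSet_psiT t hx

/-- The Lipschitz bound in (b), witnessed by an explicit expression of total length `C * |s - t|`
rather than only by the infimum; this form adds up along products. -/
lemma exists_mul_abs_sub_mem (hμ : ∀ a, 0 ≤ μ a) (w : FR A) :
    ∃ C : ℝ, 0 ≤ C ∧ ∀ s t : ℝ, C * |s - t| ∈
      wordNormSet (genFR A) (fun p => |p.2| * μ p.1) ((psiT s w)⁻¹ * psiT t w) := by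
  induction w using Monoid.CoprodI.induction_on with
  | one => exact ⟨0, le_rfl, fun s t => by simpa using zero_mem_wordNormSet_one⟩
  | of a r =>
    refine ⟨|r.toAdd| * μ a, mul_nonneg (abs_nonneg _) (hμ a), fun s t => ?_⟩
    change _ ∈ wordNormSet _ _
      ((psiT s (genFR A (a, r.toAdd)))⁻¹ * psiT t (genFR A (a, r.toAdd)))
    have hgen : (psiT s (genFR A (a, r.toAdd)))⁻¹ * psiT t (genFR A (a, r.toAdd))
        = genFR A (a, (t - s) * r.toAdd) := by
      rw [psiT_genFR, psiT_genFR, inv_mul_eq_iff_eq_mul]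
      simp only [genFR]
      rw [← map_mul, ← ofAdd_add]
      congr 2
      ring
    rw [hgen]
    convert length_mem_wordNormSet_gen (gen := genFR A) (ℓ := fun p => |p.2| * μ p.1)
      (a, (t - s) * r.toAdd) using 1
    simp only [abs_mul, abs_sub_comm t s]
    ring
  | mul x y hx hy =>
    obtain ⟨C, hC, hx⟩ := hx
    obtain ⟨D, hD, hy⟩ := hy
    refine ⟨C + D, add_nonneg hC hD, fun s t => ?_⟩
    convert add_mem_wordNormSet_mul (mem_wordNormSet_conj (psiT s y)⁻¹ (hx s t)) (hy s t) using 1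
    · simp [mul_assoc]
    · ring

end FreeProduct

/-- (a) `‖ψ_t(w)‖ = |t|·‖w‖` for all `w ∈ F_ℝ(A)` and `t ∈ ℝ`;
(b) for every `w` there is `C_w ≥ 0` with `‖ψ_s(w)⁻¹ ψ_t(w)‖ ≤ C_w·|s−t|` for all `s,t`. -/
theorem psiT_norm_properties
    {A : Type*} (μ : A → ℝ) (hμ : ∀ a, 0 ≤ μ a) :
    (∀ (w : FR A) (t : ℝ),
        FRnorm μ (psiT t w) = |t| * FRnorm μ w) ∧
    (∀ w : FR A, ∃ C : ℝ, 0 ≤ C ∧ ∀ s t : ℝ,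
        FRnorm μ ((psiT s w)⁻¹ * psiT t w) ≤ C * |s - t|) := by
  refine ⟨fun w t => le_antisymm (FRnorm_psiT_le hμ t w) ?_, fun w => ?_⟩
  · rcases eq_or_ne t 0 with rfl | ht
    · simpa using FRnorm_nonneg hμ _
    · have h := FRnorm_psiT_le hμ t⁻¹ (psiT t w)
      rw [psiT_inv_psiT ht, abs_inv] at h
      rwa [← le_inv_mul_iff₀ (abs_pos.mpr ht)]
  · obtain ⟨C, hC, h⟩ := exists_mul_abs_sub_mem hμ w
    exact ⟨C, hC, fun s t => FRnorm_le_of_mem hμ (h s t)⟩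
end

section
/- Let A be a set with a length function μ. Under the natural embedding F(A) ≤ F_ℝ(A) (sending each generator a to a(1)), the restriction of the pseudonorm ‖·‖_{F_ℝ(A;μ)} to F(A) coincides with the word pseudonorm ‖·‖_{F(A;μ)}: for every w ∈ F(A), ‖w‖_{F_ℝ(A;μ)} = ‖w‖_{F(A;μ)}. -/
/-- The natural embedding `F(A) → F_ℝ(A)` sending each generator `a` to `a(1)`. -/
noncomputable def FGtoFR (A : Type*) : FreeGroup A →* FR A :=
  FreeGroup.lift (fun a => genFR A (a, (1 : ℝ)))

/-! ### Collapsing lists of syllables -/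

/-- `Collapses μ L c`: the list of syllables `L` can be reduced to the empty list, with total cost
at most `c`, by deleting syllables `(a, r)` at cost `|r| * μ a` and merging adjacent syllables of
the same type for free. -/
inductive Collapses {A : Type*} (μ : A → ℝ) : List (A × ℝ) → ℝ → Prop
  | nil (c : ℝ) : 0 ≤ c → Collapses μ [] c
  | del (u v : List (A × ℝ)) (a : A) (r c c' : ℝ) :
      Collapses μ (u ++ v) c → c + |r| * μ a ≤ c' → Collapses μ (u ++ (a, r) :: v) c'
  | merge (u v : List (A × ℝ)) (a : A) (r s c : ℝ) :
      Collapses μ (u ++ (a, r + s) :: v) c → Collapses μ (u ++ (a, r) :: (a, s) :: v) c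

/-- Two marked positions in the same list either agree, or one lies to the left of the other. -/
lemma append_cons_eq_append_cons {α : Type*} {u v u' v' : List α} {x y : α}
    (h : u ++ x :: v = u' ++ y :: v') :
    (u = u' ∧ x = y ∧ v = v') ∨ (∃ m, u' = u ++ x :: m ∧ v = m ++ y :: v') ∨
      (∃ m, u = u' ++ y :: m ∧ v' = m ++ x :: v) := by
  rcases List.append_eq_append_iff.1 h with ⟨m, h1, h2⟩ | ⟨m, h1, h2⟩
  · cases m with
    | nil => simp at h1 h2; exact Or.inl ⟨h1.symm, h2.1, h2.2⟩
    | cons z m => simp at h2; exact Or.inr (Or.inl ⟨m, by rw [h1, h2.1], h2.2⟩)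
  · cases m with
    | nil => simp at h1 h2; exact Or.inl ⟨h1, h2.1.symm, h2.2.symm⟩
    | cons z m => simp at h2; exact Or.inr (Or.inr ⟨m, by rw [h1, h2.1], h2.2⟩)

namespace Collapses

variable {A : Type*} {μ : A → ℝ}

lemma weaken {L : List (A × ℝ)} {c c' : ℝ} (h : Collapses μ L c) (hc : c ≤ c') :
    Collapses μ L c' := by
  induction h generalizing c' with
  | nil c h => exact .nil _ (h.trans hc)
  | del u v a r c d h hd ih => exact .del u v a r c c' h (hd.trans hc)
  | merge u v a r s c h ih => exact .merge u v a r s c' (ih hc)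

/-- Changing the exponent of one syllable changes the cost in a Lipschitz way. -/
lemma change (hμ : ∀ a, 0 ≤ μ a) {L : List (A × ℝ)} {c : ℝ} (h : Collapses μ L c)
    {u v : List (A × ℝ)} {a : A} {p : ℝ} (q : ℝ) (hL : L = u ++ (a, p) :: v) :
    Collapses μ (u ++ (a, q) :: v) (c + |p - q| * μ a) := by
  induction h generalizing u v p q with
  | nil c h => simp at hL
  | del u' v' b r c d h hd ih =>
    rcases append_cons_eq_append_cons hL with ⟨rfl, h2, rfl⟩ | ⟨m, rfl, rfl⟩ | ⟨m, rfl, rfl⟩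
    · obtain ⟨rfl, rfl⟩ := Prod.mk.inj h2
      refine .del _ _ _ _ _ _ h ?_
      have h1 : |q| ≤ |r| + |r - q| := by
        have := abs_sub_abs_le_abs_sub q r
        rw [abs_sub_comm q r] at this
        linarith
      have := mul_le_mul_of_nonneg_right h1 (hμ b)
      linarith
    · have := @ih (u' ++ m) v p q (by simp)
      have := del u' (m ++ (a, q) :: v) b r _ (d + |p - q| * μ a) (by simpa using this)
        (by linarith)
      simpa using this
    · have := @ih u (m ++ v') p q (by simp)
      have := del (u ++ (a, q) :: m) v' b r _ (d + |p - q| * μ a) (by simpa using this)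
        (by linarith)
      simpa using this
  | merge u' v' b r s c h ih =>
    rcases append_cons_eq_append_cons hL with ⟨rfl, h2, rfl⟩ | ⟨m, rfl, h3⟩ | ⟨m, rfl, rfl⟩
    · obtain ⟨rfl, rfl⟩ := Prod.mk.inj h2
      have := @ih u' v' (r + s) (q + s) rfl
      rw [add_sub_add_right_eq_sub] at this
      exact .merge _ _ _ _ _ _ this
    · cases m with
      | nil =>
        simp at h3
        obtain ⟨⟨rfl, rfl⟩, rfl⟩ := h3
        have := @ih u' v' (r + s) (r + q) rfl
        rw [add_sub_add_left_eq_sub] at this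
        simpa using merge _ _ _ _ _ _ this
      | cons z m =>
        simp at h3
        obtain ⟨rfl, rfl⟩ := h3
        have := @ih (u' ++ (b, r + s) :: m) v p q (by simp)
        have := merge u' (m ++ (a, q) :: v) b r s _ (by simpa using this)
        simpa using this
    · have := @ih u (m ++ (b, r + s) :: v') p q (by simp)
      have := merge (u ++ (a, q) :: m) v' b r s _ (by simpa using this)
      simpa using this

lemma erase (hμ : ∀ a, 0 ≤ μ a) {L : List (A × ℝ)} {c : ℝ} (h : Collapses μ L c)
    {u v : List (A × ℝ)} {a : A} {p : ℝ} (hL : L = u ++ (a, p) :: v) :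
    Collapses μ (u ++ v) (c + |p| * μ a) := by
  induction h generalizing u v p with
  | nil c h => simp at hL
  | del u' v' b r c d h hd ih =>
    rcases append_cons_eq_append_cons hL with ⟨rfl, h2, rfl⟩ | ⟨m, rfl, rfl⟩ | ⟨m, rfl, rfl⟩
    · obtain ⟨rfl, rfl⟩ := Prod.mk.inj h2
      have := mul_nonneg (abs_nonneg r) (hμ b)
      exact h.weaken (by linarith)
    · have := @ih (u' ++ m) v p (by simp)
      have := del u' (m ++ v) b r _ (d + |p| * μ a) (by simpa using this) (by linarith)
      simpa using this
    · have := @ih u (m ++ v') p (by simp)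
      have := del (u ++ m) v' b r _ (d + |p| * μ a) (by simpa using this) (by linarith)
      simpa using this
  | merge u' v' b r s c h ih =>
    rcases append_cons_eq_append_cons hL with ⟨rfl, h2, rfl⟩ | ⟨m, rfl, h3⟩ | ⟨m, rfl, rfl⟩
    · obtain ⟨rfl, rfl⟩ := Prod.mk.inj h2
      simpa using h.change hμ s rfl
    · cases m with
      | nil =>
        simp at h3
        obtain ⟨⟨rfl, rfl⟩, rfl⟩ := h3
        simpa using h.change hμ r rfl
      | cons z m =>
        simp at h3
        obtain ⟨rfl, rfl⟩ := h3
        have := @ih (u' ++ (b, r + s) :: m) v p (by simp)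
        have := merge u' (m ++ v) b r s _ (by simpa using this)
        simpa using this
    · have := @ih u (m ++ (b, r + s) :: v') p (by simp)
      have := merge (u ++ m) v' b r s _ (by simpa using this)
      simpa using this

/-- The converse of the constructor `merge`. -/
lemma merged (hμ : ∀ a, 0 ≤ μ a) {L : List (A × ℝ)} {c : ℝ} (h : Collapses μ L c)
    {u v : List (A × ℝ)} {a : A} {p q : ℝ} (hL : L = u ++ (a, p) :: (a, q) :: v) :
    Collapses μ (u ++ (a, p + q) :: v) c := by
  induction h generalizing u v p q with
  | nil c h => simp at hL
  | del u' v' b r c d h hd ih =>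
    rcases append_cons_eq_append_cons hL with ⟨rfl, h2, rfl⟩ | ⟨m, rfl, rfl⟩ | ⟨m, rfl, h3⟩
    · obtain ⟨rfl, rfl⟩ := Prod.mk.inj h2
      have := h.change hμ (r + q) rfl
      exact this.weaken (by simpa using hd)
    · have := @ih (u' ++ m) v p q (by simp)
      have := del u' (m ++ (a, p + q) :: v) b r _ d (by simpa using this) hd
      simpa using this
    · cases m with
      | nil =>
        simp at h3
        obtain ⟨⟨rfl, rfl⟩, rfl⟩ := h3
        have := h.change hμ (p + q) (u := u) (v := v) (a := a) (p := p) (by simp)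
        exact this.weaken (by simpa using hd)
      | cons z m =>
        simp at h3
        obtain ⟨rfl, rfl⟩ := h3
        have := @ih u (m ++ v') p q (by simp)
        have := del (u ++ (a, p + q) :: m) v' b r _ d (by simpa using this) hd
        simpa using this
  | merge u' v' b r s c h ih =>
    rcases append_cons_eq_append_cons hL with ⟨rfl, h2, h3⟩ | ⟨m, rfl, h3⟩ | ⟨m, rfl, h3⟩
    · obtain ⟨rfl, rfl⟩ := Prod.mk.inj h2
      simp at h3
      obtain ⟨rfl, rfl⟩ := h3
      exact h
    · cases m with
      | nil =>
        simp at h3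
        obtain ⟨⟨rfl, rfl⟩, rfl⟩ := h3
        -- the merge joins a syllable on the left with `(a, p)`
        have := @ih u' v (r + s) q rfl
        rw [add_assoc] at this
        simpa using merge _ _ _ _ _ _ this
      | cons z m =>
        simp at h3
        obtain ⟨rfl, rfl⟩ := h3
        have := @ih (u' ++ (b, r + s) :: m) v p q (by simp)
        have := merge u' (m ++ (a, p + q) :: v) b r s _ (by simpa using this)
        simpa using this
    · cases m with
      | nil =>
        simp at h3
        obtain ⟨⟨rfl, rfl⟩, rfl⟩ := h3
        -- the merge joins `(a, q)` with a syllable on the right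
        have := @ih u v' p (q + s) (by simp)
        rw [← add_assoc] at this
        exact .merge _ _ _ _ _ _ this
      | cons z m =>
        simp at h3
        obtain ⟨rfl, rfl⟩ := h3
        have := @ih u (m ++ (b, r + s) :: v') p q (by simp)
        have := merge (u ++ (a, p + q) :: m) v' b r s _ (by simpa using this)
        simpa using this

end Collapses

/-! ### Invariance under the relations of the free product -/

/-- The congruence on words identifying two words when they collapse at the same costs in every
context. -/
def collapseCon {A : Type*} (μ : A → ℝ) : Con (FreeMonoid (A × ℝ)) where
  r L L' := ∀ (u v : List (A × ℝ)) (c : ℝ),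
    Collapses μ (u ++ (L.toList ++ v)) c ↔ Collapses μ (u ++ (L'.toList ++ v)) c
  iseqv := ⟨fun _ _ _ _ => Iff.rfl, fun h u v c => (h u v c).symm,
    fun h h' u v c => (h u v c).trans (h' u v c)⟩
  mul' := by
    intro L L' K K' h h' u v c
    have h1 := h u (K.toList ++ v) c
    have h2 := h' (u ++ L'.toList) v c
    simp only [FreeMonoid.toList_mul, List.append_assoc] at h1 h2 ⊢
    exact h1.trans h2

/-- The element of `F_ℝ(A)` spelled by a list of syllables. -/
noncomputable def syllableProd {A : Type*} (L : List (A × ℝ)) : FR A := (L.map (genFR A)).prod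

/-- Whether a list collapses at cost `c` depends only on the element of `F_ℝ(A)` it spells. -/
lemma Collapses.of_syllableProd_eq {A : Type*} {μ : A → ℝ} (hμ : ∀ a, 0 ≤ μ a)
    {L L' : List (A × ℝ)} (h : syllableProd L = syllableProd L') {c : ℝ}
    (hL : Collapses μ L c) : Collapses μ L' c := by
  let f : ∀ a : A, Multiplicative ℝ →* (collapseCon μ).Quotient := fun a =>
    { toFun := fun r => ((FreeMonoid.of (a, r.toAdd) : FreeMonoid (A × ℝ)) :
        (collapseCon μ).Quotient)
      map_one' := by
        rw [← Con.coe_one, Con.eq]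
        intro u v c
        simp only [FreeMonoid.toList_of, FreeMonoid.toList_one, List.nil_append,
          List.singleton_append, toAdd_one]
        refine ⟨fun h => ?_, fun h => .del _ _ _ _ _ _ h (by simp)⟩
        simpa using h.erase hμ rfl
      map_mul' := by
        intro r s
        rw [← Con.coe_mul, Con.eq]
        intro u v c
        simp only [FreeMonoid.toList_of, FreeMonoid.toList_mul,
          toAdd_mul, List.cons_append]
        exact ⟨fun h => .merge _ _ _ _ _ _ h, fun h => h.merged hμ rfl⟩ }
  have key : ∀ K : List (A × ℝ), Monoid.CoprodI.lift f (syllableProd K) =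
      ((FreeMonoid.ofList K : FreeMonoid (A × ℝ)) : (collapseCon μ).Quotient) := by
    intro K
    induction K with
    | nil => simp [syllableProd]
    | cons x K ih =>
      have : syllableProd (x :: K) = genFR A x * syllableProd K := by simp [syllableProd]
      rw [this, map_mul, ih, FreeMonoid.ofList_cons, Con.coe_mul]
      congr 1
  have h1 := key L
  rw [h, key L', Con.eq] at h1
  have h2 := h1 [] [] c
  simp only [FreeMonoid.toList_ofList, List.append_nil, List.nil_append] at h2
  exact h2.2 hL

lemma syllableProd_append {A : Type*} (L L' : List (A × ℝ)) :
    syllableProd (L ++ L') = syllableProd L * syllableProd L' := by simp [syllableProd]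

lemma syllableProd_cons {A : Type*} (x : A × ℝ) (L : List (A × ℝ)) :
    syllableProd (x :: L) = genFR A x * syllableProd L := by simp [syllableProd]

lemma exists_syllableProd_eq {A : Type*} (g : FR A) : ∃ L, syllableProd L = g := by
  induction g using Monoid.CoprodI.induction_on with
  | one => exact ⟨[], by simp [syllableProd]⟩
  | of a r => exact ⟨[(a, r.toAdd)], by simp [syllableProd, genFR]⟩
  | mul x y hx hy =>
    obtain ⟨L, rfl⟩ := hx
    obtain ⟨K, rfl⟩ := hy
    exact ⟨L ++ K, syllableProd_append L K⟩

lemma genFR_inv {A : Type*} (a : A) (r : ℝ) : (genFR A (a, r))⁻¹ = genFR A (a, -r) := by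
  simp [genFR, ofAdd_neg]

/-- An expression of `g` as a product of conjugates of generators bounds the collapse cost of some
list spelling `g`. -/
lemma exists_collapses_of_mem {A : Type*} {μ : A → ℝ} (hμ : ∀ a, 0 ≤ μ a) (g : FR A) (x : ℝ)
    (hx : x ∈ wordNormSet (genFR A) (fun p => |p.2| * μ p.1) g) :
    ∃ L, syllableProd L = g ∧ Collapses μ L x := by
  obtain ⟨l, rfl, rfl⟩ := hx
  induction l with
  | nil => exact ⟨[], by simp [syllableProd], .nil _ (by simp)⟩
  | cons p l ih =>
    obtain ⟨K, hK, hKc⟩ := ih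
    obtain ⟨h, ⟨a, r⟩, b⟩ := p
    obtain ⟨H, hH⟩ := exists_syllableProd_eq h
    obtain ⟨H', hH'⟩ := exists_syllableProd_eq h⁻¹
    have h1 : Collapses μ (H ++ (H' ++ K)) _ := hKc.of_syllableProd_eq hμ (by
      rw [syllableProd_append, syllableProd_append, hH, hH', mul_inv_cancel_left])
    refine ⟨H ++ (a, if b then r else -r) :: (H' ++ K), ?_, .del _ _ _ _ _ _ h1 ?_⟩
    · rw [syllableProd_append, syllableProd_cons, syllableProd_append, hH, hH', hK]
      cases b <;> simp [genFR_inv, mul_assoc]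
    · cases b <;> simp [add_comm]

/-! ### Collapsing lists with integer exponents inside the free group -/

lemma conj_mem_wordNormSet {G I : Type*} [Group G] {gen : I → G} {ℓ : I → ℝ} {g : G} {x : ℝ}
    (hx : x ∈ wordNormSet gen ℓ g) (h : G) (i : I) (b : Bool) :
    ℓ i + x ∈ wordNormSet gen ℓ (h * (if b then gen i else (gen i)⁻¹) * h⁻¹ * g) := by
  obtain ⟨l, rfl, rfl⟩ := hx
  exact ⟨(h, i, b) :: l, by simp, by simp⟩

lemma conj_pow_mem_wordNormSet {G I : Type*} [Group G] {gen : I → G} {ℓ : I → ℝ} {g : G} {x : ℝ}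
    (hx : x ∈ wordNormSet gen ℓ g) (h : G) (i : I) (b : Bool) (n : ℕ) :
    n * ℓ i + x ∈ wordNormSet gen ℓ (h * (if b then gen i else (gen i)⁻¹) ^ n * h⁻¹ * g) := by
  induction n with
  | zero => simpa using hx
  | succ n ih =>
    convert conj_mem_wordNormSet ih h i b using 1
    · rw [pow_succ']
      simp only [mul_assoc, inv_mul_cancel_left]
    · push_cast
      ring

lemma conj_zpow_mem_wordNormSet {G I : Type*} [Group G] {gen : I → G} {ℓ : I → ℝ} {g : G} {x : ℝ}
    (hx : x ∈ wordNormSet gen ℓ g) (h : G) (i : I) (n : ℤ) :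
    |(n : ℝ)| * ℓ i + x ∈ wordNormSet gen ℓ (h * gen i ^ n * h⁻¹ * g) := by
  obtain ⟨k, rfl | rfl⟩ := n.eq_nat_or_neg
  · simpa using conj_pow_mem_wordNormSet hx h i true k
  · simpa using conj_pow_mem_wordNormSet hx h i false k

/-- The element of `F(A)` spelled by a list of syllables, exponents being rounded down to integers;
it is only meaningful when all exponents are integers. -/
noncomputable def floorProd {A : Type*} (L : List (A × ℝ)) : FreeGroup A :=
  (L.map fun p => FreeGroup.of p.1 ^ ⌊p.2⌋).prod

/-- A collapse of a list with integer exponents can be carried out in `F(A)`. -/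
lemma Collapses.exists_mem_wordNormSet {A : Type*} {μ : A → ℝ} {L : List (A × ℝ)} {c : ℝ}
    (h : Collapses μ L c) (hL : ∀ p ∈ L, ∃ n : ℤ, p.2 = n) :
    ∃ x ∈ wordNormSet FreeGroup.of μ (floorProd L), x ≤ c := by
  induction h with
  | nil c h => exact ⟨0, ⟨[], by simp [floorProd], by simp⟩, h⟩
  | del u v a r c d h hd ih =>
    obtain ⟨x, hx, hxc⟩ := ih fun p hp => hL p (by
      rcases List.mem_append.1 hp with hp | hp <;> simp [hp])
    obtain ⟨n, hn⟩ := hL (a, r) (by simp)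
    simp only at hn
    subst hn
    refine ⟨_, ?_, (by linarith : |(n : ℝ)| * μ a + x ≤ d)⟩
    convert conj_zpow_mem_wordNormSet hx (floorProd u) a n using 1
    simp [floorProd, mul_assoc]
  | merge u v a r s c h ih =>
    obtain ⟨n, hn⟩ := hL (a, r) (by simp)
    obtain ⟨m, hm⟩ := hL (a, s) (by simp)
    simp only at hn hm
    subst hn hm
    obtain ⟨x, hx, hxc⟩ := ih fun p hp => by
      rcases List.mem_append.1 hp with hp | hp
      · exact hL p (by simp [hp])
      · rcases List.mem_cons.1 hp with rfl | hp
        · exact ⟨n + m, by simp⟩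
        · exact hL p (by simp [hp])
    refine ⟨x, ?_, hxc⟩
    convert hx using 1
    have : ⌊(n : ℝ) + m⌋ = n + m := by exact_mod_cast Int.floor_intCast (R := ℝ) (n + m)
    simp [floorProd, this, zpow_add, mul_assoc]

/-- Every element of `F(A)` is spelled, in both groups, by a list with integer exponents. -/
lemma exists_integral_list {A : Type*} (w : FreeGroup A) :
    ∃ L : List (A × ℝ), (∀ p ∈ L, ∃ n : ℤ, p.2 = n) ∧ syllableProd L = FGtoFR A w ∧
      floorProd L = w := by
  induction w using FreeGroup.induction_on with
  | C1 => exact ⟨[], by simp, by simp [syllableProd], by simp [floorProd]⟩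
  | of a =>
    exact ⟨[(a, 1)], by simpa using ⟨1, by simp⟩, by simp [syllableProd, FGtoFR],
      by simp [floorProd]⟩
  | inv_of a _ =>
    have hfloor : ⌊(-1 : ℝ)⌋ = -1 := by exact_mod_cast Int.floor_intCast (R := ℝ) (-1)
    exact ⟨[(a, -1)], by simpa using ⟨-1, by simp⟩, by simp [syllableProd, FGtoFR, genFR_inv],
      by simp [floorProd, hfloor]⟩
  | mul x y hx hy =>
    obtain ⟨L, h1, h2, h3⟩ := hx
    obtain ⟨K, k1, k2, k3⟩ := hy
    refine ⟨L ++ K, fun p hp => ?_, by rw [syllableProd_append, h2, k2, map_mul], ?_⟩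
    · exact (List.mem_append.1 hp).elim (h1 p) (k1 p)
    · rw [← h3, ← k3]
      simp [floorProd]

/-! ### Comparison of the two norms -/

lemma wordNormSet_subset {A : Type*} (μ : A → ℝ) (w : FreeGroup A) :
    wordNormSet FreeGroup.of μ w ⊆
      wordNormSet (genFR A) (fun p => |p.2| * μ p.1) (FGtoFR A w) := by
  rintro x ⟨l, rfl, rfl⟩
  refine ⟨l.map fun p => (FGtoFR A p.1, (p.2.1, 1), p.2.2), ?_, ?_⟩
  · rw [map_list_prod, List.map_map, List.map_map]
    congr 1
    refine List.map_congr_left fun p _ => ?_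
    obtain ⟨h, a, b⟩ := p
    cases b <;> simp [FGtoFR]
  · simp [List.map_map, Function.comp_def]

/-- under the natural embedding `F(A) ≤ F_ℝ(A)`, the restriction of
`‖·‖_{F_ℝ(A;μ)}` to `F(A)` coincides with the word pseudonorm `‖·‖_{F(A;μ)}`. -/
theorem FRnorm_restricts_to_FGnorm
    {A : Type*} (μ : A → ℝ) (hμ : ∀ a, 0 ≤ μ a) :
    ∀ w : FreeGroup A, FRnorm μ (FGtoFR A w) = wordNorm FreeGroup.of μ w := by
  intro w
  have hsub := wordNormSet_subset μ w
  have hdom : ∀ x ∈ wordNormSet (genFR A) (fun p => |p.2| * μ p.1) (FGtoFR A w),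
      ∃ y ∈ wordNormSet FreeGroup.of μ w, y ≤ x := by
    intro x hx
    obtain ⟨K, hK, hKx⟩ := exists_collapses_of_mem hμ _ x hx
    obtain ⟨L, hL, hLw, hLf⟩ := exists_integral_list w
    have := (hKx.of_syllableProd_eq hμ (hK.trans hLw.symm)).exists_mem_wordNormSet hL
    rwa [hLf] at this
  have hbdd : BddBelow (wordNormSet (genFR A) (fun p => |p.2| * μ p.1) (FGtoFR A w)) := by
    refine ⟨0, ?_⟩
    rintro x ⟨l, -, rfl⟩
    refine List.sum_nonneg fun y hy => ?_
    obtain ⟨p, -, rfl⟩ := List.mem_map.1 hy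
    exact mul_nonneg (abs_nonneg _) (hμ _)
  unfold FRnorm wordNorm
  rcases (wordNormSet FreeGroup.of μ w).eq_empty_or_nonempty with he | hne
  -- domination forces the other set to be empty too, so both infima are the same junk value
  · have he' : wordNormSet (genFR A) (fun p => |p.2| * μ p.1) (FGtoFR A w) = ∅ :=
      Set.eq_empty_of_forall_notMem fun x hx => by
        obtain ⟨y, hy, -⟩ := hdom x hx
        simp [he] at hy
    rw [he, he']
  · refine le_antisymm (csInf_le_csInf hbdd hne hsub) ?_
    refine le_csInf (hne.mono hsub) fun x hx => ?_
    obtain ⟨y, hy, hyx⟩ := hdom x hx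
    exact (csInf_le (hbdd.mono hsub) hy).trans hyx
end

section
/- Let A be a set with a length function μ and let 𝐰 = a₁(r₁)⋯a_k(r_k) be a word in the alphabet {a(r) : a ∈ A, r ∈ ℝ} representing w ∈ F_ℝ(A). Then ‖w‖_{F_ℝ(A;μ)} = min{ μ(𝐮) : 𝐮 is a cancellation sequence in 𝐰 }, and the minimum is attained. -/
/-- The element of `F_ℝ(A)` represented by the word `𝐰 = a₁(r₁)⋯a_k(r_k)`. -/
def wordProd {A : Type*} (l : List (A × ℝ)) : FR A :=
  (l.map (genFR A)).prod

/-! ### Words in the free product -/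

theorem wordProd_append {A : Type*} (l l' : List (A × ℝ)) :
    wordProd (l ++ l') = wordProd l * wordProd l' := by
  simp [wordProd]

theorem wordProd_cons {A : Type*} (p : A × ℝ) (l : List (A × ℝ)) :
    wordProd (p :: l) = genFR A p * wordProd l := by
  simp [wordProd]

theorem wordProd_nil {A : Type*} : wordProd ([] : List (A × ℝ)) = 1 := rfl

theorem genFR_zero {A : Type*} (a : A) : genFR A (a, 0) = 1 :=
  map_one (Monoid.CoprodI.of (M := fun _ : A => Multiplicative ℝ) (i := a))

theorem genFR_add {A : Type*} (a : A) (r s : ℝ) :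
    genFR A (a, r + s) = genFR A (a, r) * genFR A (a, s) :=
  map_mul (Monoid.CoprodI.of (M := fun _ : A => Multiplicative ℝ) (i := a))
    (Multiplicative.ofAdd r) (Multiplicative.ofAdd s)

theorem genFR_neg {A : Type*} (a : A) (r : ℝ) :
    genFR A (a, -r) = (genFR A (a, r))⁻¹ := by
  rw [eq_inv_iff_mul_eq_one, ← genFR_add, neg_add_cancel, genFR_zero]

theorem exists_wordProd_eq {A : Type*} (g : FR A) : ∃ l, wordProd l = g := by
  induction g using Monoid.CoprodI.induction_on with
  | one => exact ⟨[], rfl⟩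
  | of i m => exact ⟨[(i, m.toAdd)], by simp [wordProd, genFR]⟩
  | mul x y hx hy =>
    obtain ⟨l, rfl⟩ := hx
    obtain ⟨l', rfl⟩ := hy
    exact ⟨l ++ l', wordProd_append l l'⟩

/-- The normal form theorem for free products: a word without zero letters and without adjacent
letters of the same name represents `1` only if it is empty. -/
theorem eq_nil_of_reduced {A : Type*} (l : List (A × ℝ)) (h0 : ∀ p ∈ l, p.2 ≠ 0)
    (hc : l.IsChain fun p q => p.1 ≠ q.1) (h1 : wordProd l = 1) : l = [] := by
  classical
  let W : Monoid.CoprodI.Word (fun _ : A => Multiplicative ℝ) :=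
    { toList := l.map fun p => ⟨p.1, Multiplicative.ofAdd p.2⟩
      ne_one := by
        intro q hq
        obtain ⟨p, hp, rfl⟩ := List.mem_map.1 hq
        exact fun h => h0 p hp (Multiplicative.ofAdd.injective h)
      chain_ne := by
        rw [List.isChain_map]
        exact hc }
  have hW : W.prod = (Monoid.CoprodI.Word.empty).prod := by
    rw [Monoid.CoprodI.Word.prod_empty, ← h1]
    simp only [Monoid.CoprodI.Word.prod, W, wordProd, List.map_map]
    rfl
  have hE : W = Monoid.CoprodI.Word.empty := Monoid.CoprodI.Word.equiv.symm.injective hW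
  exact List.map_eq_nil_iff.1 (congrArg Monoid.CoprodI.Word.toList hE)

theorem reducible_or_reduced {A : Type*} (l : List (A × ℝ)) :
    (∃ x a y, l = x ++ (a, 0) :: y) ∨
    (∃ x a r s y, l = x ++ (a, r) :: (a, s) :: y) ∨
    ((∀ p ∈ l, p.2 ≠ 0) ∧ l.IsChain fun p q => p.1 ≠ q.1) := by
  induction l with
  | nil => right; right; simp
  | cons p l ih =>
    obtain ⟨a, r⟩ := p
    rcases ih with ⟨x, b, y, rfl⟩ | ⟨x, b, s, t, y, rfl⟩ | ⟨h0, hc⟩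
    · exact Or.inl ⟨(a, r) :: x, b, y, rfl⟩
    · exact Or.inr (Or.inl ⟨(a, r) :: x, b, s, t, y, rfl⟩)
    · by_cases hr : r = 0
      · subst hr
        exact Or.inl ⟨[], a, l, rfl⟩
      · rcases l with _ | ⟨⟨b, s⟩, l⟩
        · right; right; simp [hr]
        · by_cases hab : a = b
          · subst hab
            exact Or.inr (Or.inl ⟨[], a, r, s, l, rfl⟩)
          · refine Or.inr (Or.inr ⟨?_, List.isChain_cons_cons.2 ⟨hab, hc⟩⟩)
            intro p hp
            rcases List.mem_cons.1 hp with rfl | hp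
            · exact hr
            · exact h0 p hp

/-- A nonempty word representing `1` can be shortened, either by deleting a zero letter or by
merging two adjacent letters of the same name. -/
theorem exists_reduction {A : Type*} (l : List (A × ℝ)) (h1 : wordProd l = 1) (hl : l ≠ []) :
    (∃ x a y, l = x ++ (a, 0) :: y) ∨ (∃ x a r s y, l = x ++ (a, r) :: (a, s) :: y) := by
  rcases reducible_or_reduced l with h | h | ⟨h0, hc⟩
  · exact Or.inl h
  · exact Or.inr h
  · exact absurd (eq_nil_of_reduced l h0 hc h1) hl

theorem wordProd_delete_zero {A : Type*} (x y : List (A × ℝ)) (a : A) :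
    wordProd (x ++ (a, 0) :: y) = wordProd (x ++ y) := by
  simp [wordProd_append, wordProd_cons, genFR_zero]

theorem wordProd_merge {A : Type*} (x y : List (A × ℝ)) (a : A) (r s : ℝ) :
    wordProd (x ++ (a, r) :: (a, s) :: y) = wordProd (x ++ (a, r + s) :: y) := by
  simp [wordProd_append, wordProd_cons, genFR_add, mul_assoc]

/-! ### Pairs of words with the same names -/

/-- The word `a₁(p₁)⋯a_k(p_k)` of a list of triples `(aᵢ, pᵢ, rᵢ)`, to be thought of as the
word `𝐰 − 𝐮` that remains after a cancellation. -/
def remWord {A : Type*} (L : List (A × ℝ × ℝ)) : List (A × ℝ) :=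
  L.map fun t => (t.1, t.2.1)

/-- The word `a₁(r₁)⋯a_k(r_k)` of a list of triples `(aᵢ, pᵢ, rᵢ)`. -/
def tgtWord {A : Type*} (L : List (A × ℝ × ℝ)) : List (A × ℝ) :=
  L.map fun t => (t.1, t.2.2)

/-- The weighted `ℓ¹`-distance `Σᵢ |rᵢ - pᵢ|·μ(aᵢ)` between the two words of a list of triples. -/
def pairCost {A : Type*} (μ : A → ℝ) (L : List (A × ℝ × ℝ)) : ℝ :=
  (L.map fun t => |t.2.2 - t.2.1| * μ t.1).sum

theorem pairCost_append {A : Type*} (μ : A → ℝ) (L M : List (A × ℝ × ℝ)) :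
    pairCost μ (L ++ M) = pairCost μ L + pairCost μ M := by
  simp [pairCost]

theorem pairCost_cons {A : Type*} (μ : A → ℝ) (t : A × ℝ × ℝ) (L : List (A × ℝ × ℝ)) :
    pairCost μ (t :: L) = |t.2.2 - t.2.1| * μ t.1 + pairCost μ L := by
  simp [pairCost]

theorem remWord_append {A : Type*} (L M : List (A × ℝ × ℝ)) :
    remWord (L ++ M) = remWord L ++ remWord M := by
  simp [remWord]

theorem remWord_cons {A : Type*} (t : A × ℝ × ℝ) (L : List (A × ℝ × ℝ)) :
    remWord (t :: L) = (t.1, t.2.1) :: remWord L := rfl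

theorem tgtWord_append {A : Type*} (L M : List (A × ℝ × ℝ)) :
    tgtWord (L ++ M) = tgtWord L ++ tgtWord M := by
  simp [tgtWord]

theorem tgtWord_cons {A : Type*} (t : A × ℝ × ℝ) (L : List (A × ℝ × ℝ)) :
    tgtWord (t :: L) = (t.1, t.2.2) :: tgtWord L := rfl

theorem tgtWord_eq_append_cons {A : Type*} {L : List (A × ℝ × ℝ)} {x y : List (A × ℝ)} {a : A}
    {r : ℝ} (h : tgtWord L = x ++ (a, r) :: y) :
    ∃ X Y p, L = X ++ (a, p, r) :: Y ∧ tgtWord X = x ∧ tgtWord Y = y := by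
  obtain ⟨X, Z, rfl, rfl, hZ⟩ := List.map_eq_append_iff.1 h
  obtain ⟨⟨b, p, s⟩, Y, rfl, hb, rfl⟩ := List.map_eq_cons_iff.1 hZ
  obtain ⟨rfl, rfl⟩ := Prod.mk.inj hb
  exact ⟨X, Y, p, rfl, rfl, rfl⟩

theorem remWord_eq_append_cons {A : Type*} {L : List (A × ℝ × ℝ)} {x y : List (A × ℝ)} {a : A}
    {p : ℝ} (h : remWord L = x ++ (a, p) :: y) :
    ∃ X Y r, L = X ++ (a, p, r) :: Y ∧ remWord X = x ∧ remWord Y = y := by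
  obtain ⟨X, Z, rfl, rfl, hZ⟩ := List.map_eq_append_iff.1 h
  obtain ⟨⟨b, q, r⟩, Y, rfl, hb, rfl⟩ := List.map_eq_cons_iff.1 hZ
  obtain ⟨rfl, rfl⟩ := Prod.mk.inj hb
  exact ⟨X, Y, r, rfl, rfl, rfl⟩

/-- What remains of a merged letter `a(r + s)` can be redistributed over the two letters `a(r)`
and `a(s)` at no extra cost, even if `r` and `s` have opposite signs. -/
theorem exists_split {r s m : ℝ} (hm : m ∈ Set.uIcc 0 (r + s)) :
    ∃ p ∈ Set.uIcc 0 r, ∃ q ∈ Set.uIcc 0 s,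
      p + q = m ∧ |r - p| + |s - q| = |r + s - m| := by
  -- Charge the change to one letter alone if possible. If this fails, `r` and `s` have the same
  -- sign, and cancelling `a(r)` entirely leaves the rest of the change to `a(s)`.
  by_cases h1 : m - s ∈ Set.uIcc 0 r
  · exact ⟨m - s, h1, s, Set.right_mem_uIcc, by ring, by
      rw [sub_self, abs_zero, add_zero]; congr 1; ring⟩
  by_cases h2 : m - r ∈ Set.uIcc 0 s
  · exact ⟨r, Set.right_mem_uIcc, m - r, h2, by ring, by
      rw [sub_self, abs_zero, zero_add]; congr 1; ring⟩
  refine ⟨0, Set.left_mem_uIcc, m, ?_, by ring, ?_⟩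
  all_goals
    rw [Set.mem_uIcc] at *
    grind

theorem exists_cancellation_of_le {A : Type*} (μ : A → ℝ) (hμ : ∀ a, 0 ≤ μ a) (n : ℕ) :
    ∀ L : List (A × ℝ × ℝ), L.length ≤ n → wordProd (remWord L) = 1 →
      ∃ M : List (A × ℝ × ℝ), tgtWord M = tgtWord L ∧ wordProd (remWord M) = 1 ∧
        (∀ t ∈ M, t.2.1 ∈ Set.uIcc 0 t.2.2) ∧ pairCost μ M ≤ pairCost μ L := by
  induction n with
  | zero =>
    intro L hL h1
    obtain rfl := List.length_eq_zero_iff.1 (Nat.le_zero.1 hL)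
    exact ⟨[], rfl, rfl, by simp, le_rfl⟩
  | succ n ih =>
    intro L hL h1
    rcases eq_or_ne L [] with rfl | hne
    · exact ⟨[], rfl, rfl, by simp, le_rfl⟩
    rcases exists_reduction (remWord L) h1 (by simpa [remWord] using hne) with
      ⟨x, a, y, h⟩ | ⟨x, a, p, q, y, h⟩
    · obtain ⟨X, Y, r, rfl, rfl, rfl⟩ := remWord_eq_append_cons h
      rw [h, wordProd_delete_zero, ← remWord_append] at h1
      obtain ⟨M, hM, hM1, hMb, hMc⟩ := ih (X ++ Y) (by simp at hL ⊢; omega) h1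
      rw [tgtWord_append] at hM
      obtain ⟨X', Y', rfl, hX, hY⟩ := List.map_eq_append_iff.1 hM
      refine ⟨X' ++ (a, 0, r) :: Y', ?_, ?_, ?_, ?_⟩
      · simp only [tgtWord_append, tgtWord_cons]
        rw [← hX, ← hY]; rfl
      · rw [remWord_append, remWord_cons, wordProd_delete_zero, ← remWord_append, hM1]
      · intro t ht
        simp only [List.mem_append, List.mem_cons] at ht hMb
        rcases ht with ht | rfl | ht
        · exact hMb t (Or.inl ht)
        · exact Set.left_mem_uIcc
        · exact hMb t (Or.inr ht)
      · simp only [pairCost_append, pairCost_cons] at hMc ⊢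
        linarith
    · obtain ⟨X, Z, r, rfl, rfl, hZ⟩ := remWord_eq_append_cons h
      obtain ⟨Y0, Y, s, rfl, hY0, rfl⟩ := remWord_eq_append_cons (x := []) hZ
      obtain rfl : Y0 = [] := List.map_eq_nil_iff.1 hY0
      rw [List.nil_append] at *
      rw [h, wordProd_merge] at h1
      obtain ⟨M, hM, hM1, hMb, hMc⟩ := ih (X ++ (a, p + q, r + s) :: Y)
        (by simp at hL ⊢; omega) (by rw [remWord_append, remWord_cons]; exact h1)
      rw [tgtWord_append, tgtWord_cons] at hM
      obtain ⟨X', Y', m, rfl, hX, hY⟩ := tgtWord_eq_append_cons hM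
      obtain ⟨p', hp', q', hq', rfl, hpq⟩ := exists_split (hMb (a, m, r + s) (by simp))
      refine ⟨X' ++ (a, p', r) :: (a, q', s) :: Y', ?_, ?_, ?_, ?_⟩
      · simp only [tgtWord_append, tgtWord_cons, hX, hY]
      · rw [remWord_append, remWord_cons, remWord_cons, wordProd_merge]
        rwa [remWord_append, remWord_cons] at hM1
      · intro t ht
        simp only [List.mem_append, List.mem_cons] at ht hMb
        rcases ht with ht | rfl | rfl | ht
        · exact hMb t (Or.inl ht)
        · exact hp'
        · exact hq'
        · exact hMb t (Or.inr (Or.inr ht))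
      · simp only [pairCost_append, pairCost_cons] at hMc ⊢
        have h3 : |r + s - (p + q)| ≤ |r - p| + |s - q| := by
          have := abs_add_le (r - p) (s - q)
          rwa [show r - p + (s - q) = r + s - (p + q) by ring] at this
        have h4 := mul_le_mul_of_nonneg_right h3 (hμ a)
        have h5 := congrArg (· * μ a) hpq
        simp only [add_mul] at h4 h5
        linarith

/-- A word within distance `c` of a word with the same names that represents `1` has a
cancellation sequence of total length at most `c`: the replacing word can be chosen with each
letter lying between `0` and the given one. -/
theorem exists_cancellation {A : Type*} (μ : A → ℝ) (hμ : ∀ a, 0 ≤ μ a)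
    (L : List (A × ℝ × ℝ)) (h1 : wordProd (remWord L) = 1) :
    ∃ M : List (A × ℝ × ℝ), tgtWord M = tgtWord L ∧ wordProd (remWord M) = 1 ∧
      (∀ t ∈ M, t.2.1 ∈ Set.uIcc 0 t.2.2) ∧ pairCost μ M ≤ pairCost μ L :=
  exists_cancellation_of_le μ hμ L.length L le_rfl h1

/-! ### Invariance under change of the representing word -/

/-- The word `v` can be turned into a word representing `1` by changing the exponents of its
letters, at total cost at most `c`. The new exponents are not required to lie between `0` and
the old ones. -/
def Kills {A : Type*} (μ : A → ℝ) (v : List (A × ℝ)) (c : ℝ) : Prop :=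
  ∃ L : List (A × ℝ × ℝ), wordProd (remWord L) = 1 ∧ tgtWord L = v ∧ pairCost μ L ≤ c

theorem kills_delete_zero {A : Type*} (μ : A → ℝ) (hμ : ∀ a, 0 ≤ μ a) (x y : List (A × ℝ))
    (a : A) (c : ℝ) : Kills μ (x ++ (a, 0) :: y) c ↔ Kills μ (x ++ y) c := by
  constructor
  · rintro ⟨L, h1, hL, hc⟩
    obtain ⟨M, hM, hM1, hMb, hMc⟩ := exists_cancellation μ hμ L h1
    obtain ⟨X, Y, p, rfl, rfl, rfl⟩ := tgtWord_eq_append_cons (hM.trans hL)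
    have hp : p = 0 := by simpa using hMb (a, p, 0) (by simp)
    subst hp
    refine ⟨X ++ Y, ?_, tgtWord_append X Y, ?_⟩
    · rwa [remWord_append, remWord_cons, wordProd_delete_zero, ← remWord_append] at hM1
    · simp only [pairCost_append, pairCost_cons, sub_self, abs_zero, zero_mul, zero_add] at hMc ⊢
      linarith
  · rintro ⟨L, h1, hL, hc⟩
    obtain ⟨X, Y, rfl, rfl, rfl⟩ := List.map_eq_append_iff.1 hL
    refine ⟨X ++ (a, 0, 0) :: Y, ?_, ?_, ?_⟩
    · rwa [remWord_append, remWord_cons, wordProd_delete_zero, ← remWord_append]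
    · simp [tgtWord]
    · simp only [pairCost_append, pairCost_cons, sub_self, abs_zero, zero_mul, zero_add] at hc ⊢
      linarith

theorem kills_merge {A : Type*} (μ : A → ℝ) (hμ : ∀ a, 0 ≤ μ a) (x y : List (A × ℝ))
    (a : A) (r s c : ℝ) :
    Kills μ (x ++ (a, r) :: (a, s) :: y) c ↔ Kills μ (x ++ (a, r + s) :: y) c := by
  constructor
  · rintro ⟨L, h1, hL, hc⟩
    obtain ⟨X, Z, p, rfl, rfl, hZ⟩ := tgtWord_eq_append_cons hL
    obtain ⟨Y0, Y, q, rfl, hY0, rfl⟩ := tgtWord_eq_append_cons (x := []) hZ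
    obtain rfl : Y0 = [] := List.map_eq_nil_iff.1 hY0
    rw [List.nil_append] at *
    refine ⟨X ++ (a, p + q, r + s) :: Y, ?_, ?_, ?_⟩
    · rw [remWord_append, remWord_cons, ← wordProd_merge]
      rwa [remWord_append, remWord_cons, remWord_cons] at h1
    · simp [tgtWord]
    · simp only [pairCost_append, pairCost_cons] at hc ⊢
      have h3 : |r + s - (p + q)| ≤ |r - p| + |s - q| := by
        have := abs_add_le (r - p) (s - q)
        rwa [show r - p + (s - q) = r + s - (p + q) by ring] at this
      have h4 := mul_le_mul_of_nonneg_right h3 (hμ a)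
      simp only [add_mul] at h4
      linarith
  · rintro ⟨L, h1, hL, hc⟩
    obtain ⟨X, Y, p, rfl, rfl, rfl⟩ := tgtWord_eq_append_cons hL
    -- Keep the letter `a(s)` and charge the whole change to `a(r)`.
    refine ⟨X ++ (a, p - s, r) :: (a, s, s) :: Y, ?_, ?_, ?_⟩
    · rw [remWord_append, remWord_cons, remWord_cons, wordProd_merge, sub_add_cancel]
      rwa [remWord_append, remWord_cons] at h1
    · simp [tgtWord]
    · simp only [pairCost_append, pairCost_cons] at hc ⊢
      rw [sub_self, abs_zero, zero_mul, zero_add, show r - (p - s) = r + s - p by ring]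
      exact hc

/-- The congruence on words identifying two words that can be exchanged in every context
without affecting `Kills`. -/
def killsCon {A : Type*} (μ : A → ℝ) : Con (FreeMonoid (A × ℝ)) where
  r v w := ∀ (x y : List (A × ℝ)) (c : ℝ),
    Kills μ (x ++ (v.toList ++ y)) c ↔ Kills μ (x ++ (w.toList ++ y)) c
  iseqv := ⟨fun _ _ _ _ => Iff.rfl, fun h x y c => (h x y c).symm,
    fun h h' x y c => (h x y c).trans (h' x y c)⟩
  mul' := by
    intro v w v' w' h h' x y c
    have h1 := h x (v'.toList ++ y) c
    have h2 := h' (x ++ w.toList) y c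
    simp only [FreeMonoid.toList_mul, List.append_assoc] at h1 h2 ⊢
    exact h1.trans h2

/-- The homomorphism from `F_ℝ(A)` to words modulo `killsCon`. -/
def toKillsQuot {A : Type*} (μ : A → ℝ) (hμ : ∀ a, 0 ≤ μ a) : FR A →* (killsCon μ).Quotient :=
  Monoid.CoprodI.lift fun a =>
    { toFun := fun r => (killsCon μ).mk' (FreeMonoid.of (a, r.toAdd))
      map_one' := by
        refine ((killsCon μ).eq).2 ?_
        intro x y c
        exact kills_delete_zero μ hμ x y a c
      map_mul' := by
        intro r s
        rw [← map_mul]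
        refine ((killsCon μ).eq).2 ?_
        intro x y c
        exact (kills_merge μ hμ x y a r.toAdd s.toAdd c).symm }

theorem toKillsQuot_wordProd {A : Type*} (μ : A → ℝ) (hμ : ∀ a, 0 ≤ μ a) (v : List (A × ℝ)) :
    toKillsQuot μ hμ (wordProd v) = (killsCon μ).mk' (FreeMonoid.ofList v) := by
  induction v with
  | nil => rw [wordProd_nil, map_one, FreeMonoid.ofList_nil, map_one]
  | cons p v ih =>
    rw [wordProd_cons, map_mul, ih, FreeMonoid.ofList_cons, map_mul]
    congr 1

/-- Whether a word can be turned into a trivial one at cost at most `c` depends only on the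
element it represents. -/
theorem kills_congr {A : Type*} (μ : A → ℝ) (hμ : ∀ a, 0 ≤ μ a) {v w : List (A × ℝ)}
    (h : wordProd v = wordProd w) (c : ℝ) : Kills μ v c ↔ Kills μ w c := by
  have h1 := congrArg (toKillsQuot μ hμ) h
  rw [toKillsQuot_wordProd, toKillsQuot_wordProd] at h1
  have h2 := ((killsCon μ).eq).1 h1 [] [] c
  simpa using h2

/-! ### Expressions as products of conjugates -/

/-- The total lengths of the cancellation sequences in the word `l`. -/
def cancellationLengths {A : Type*} (μ : A → ℝ) (l : List (A × ℝ)) : Set ℝ :=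
  { x : ℝ | ∃ s : Fin l.length → ℝ,
      (∀ i, s i ∈ Set.uIcc 0 (l.get i).2) ∧
      (List.ofFn (fun i : Fin l.length =>
        genFR A ((l.get i).1, (l.get i).2 - s i))).prod = 1 ∧
      x = ∑ i, |s i| * μ (l.get i).1 }

/-- Writing `𝐰 = a(r)𝐰'` and `𝐩 = a(p)𝐩'`, one has
`wp⁻¹ = a(r - p) · a(p) (w'p'⁻¹) a(p)⁻¹`, which expresses `wp⁻¹` as a product of conjugates of the
generators `aᵢ(rᵢ - pᵢ)`. -/
theorem pairCost_mem_wordNormSet {A : Type*} (μ : A → ℝ) (L : List (A × ℝ × ℝ)) :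
    pairCost μ L ∈ wordNormSet (genFR A) (fun p => |p.2| * μ p.1)
      (wordProd (tgtWord L) * (wordProd (remWord L))⁻¹) := by
  induction L with
  | nil => exact ⟨[], by simp [tgtWord, remWord, wordProd], by simp [pairCost]⟩
  | cons t L ih =>
    obtain ⟨a, p, r⟩ := t
    obtain ⟨e, he, hx⟩ := ih
    have hconj : ∀ (h : FR A) (e : List (FR A × (A × ℝ) × Bool)),
        ((e.map fun q => (h * q.1, q.2)).map fun q =>
          q.1 * (if q.2.2 then genFR A q.2.1 else (genFR A q.2.1)⁻¹) * q.1⁻¹).prod =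
        h * (e.map fun q =>
          q.1 * (if q.2.2 then genFR A q.2.1 else (genFR A q.2.1)⁻¹) * q.1⁻¹).prod * h⁻¹ := by
      intro h e
      induction e with
      | nil => simp
      | cons q e ih =>
        simp only [List.map_cons, List.prod_cons] at ih ⊢
        rw [ih]
        group
    refine ⟨(1, (a, r - p), true) :: e.map fun q => (genFR A (a, p) * q.1, q.2), ?_, ?_⟩
    · rw [List.map_cons, List.prod_cons, hconj, ← he]
      rw [tgtWord_cons, remWord_cons, wordProd_cons, wordProd_cons]
      have hr : genFR A (a, r) = genFR A (a, r - p) * genFR A (a, p) := by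
        rw [← genFR_add, sub_add_cancel]
      simp only [hr, if_true]
      group
    · rw [pairCost_cons, hx]
      simp [Function.comp_def]

theorem mem_wordNormSet_of_mem {A : Type*} (μ : A → ℝ) (l : List (A × ℝ)) {x : ℝ}
    (hx : x ∈ cancellationLengths μ l) :
    x ∈ wordNormSet (genFR A) (fun p => |p.2| * μ p.1) (wordProd l) := by
  obtain ⟨s, -, h1, rfl⟩ := hx
  have h := pairCost_mem_wordNormSet μ
    (List.ofFn fun i : Fin l.length => ((l.get i).1, (l.get i).2 - s i, (l.get i).2))
  have ht : tgtWord (List.ofFn fun i : Fin l.length =>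
      ((l.get i).1, (l.get i).2 - s i, (l.get i).2)) = l := by
    rw [tgtWord, List.map_ofFn]
    exact List.ofFn_get l
  have hr : wordProd (remWord (List.ofFn fun i : Fin l.length =>
      ((l.get i).1, (l.get i).2 - s i, (l.get i).2))) = 1 := by
    rw [wordProd, remWord, List.map_ofFn, List.map_ofFn]
    exact h1
  have hc : pairCost μ (List.ofFn fun i : Fin l.length =>
      ((l.get i).1, (l.get i).2 - s i, (l.get i).2)) = ∑ i, |s i| * μ (l.get i).1 := by
    rw [pairCost, List.map_ofFn, List.sum_ofFn]
    simp
  rwa [ht, hr, hc, inv_one, mul_one] at h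

/-- An expression of `g` as a product of conjugates spells a word for `g` which becomes trivial
when the conjugated generators are deleted. -/
theorem exists_kills_of_expression {A : Type*} (μ : A → ℝ)
    (e : List (FR A × (A × ℝ) × Bool)) :
    ∃ v, wordProd v = (e.map fun q =>
        q.1 * (if q.2.2 then genFR A q.2.1 else (genFR A q.2.1)⁻¹) * q.1⁻¹).prod ∧
      Kills μ v (e.map fun q => |q.2.1.2| * μ q.2.1.1).sum := by
  induction e with
  | nil => exact ⟨[], by simp [wordProd], [], rfl, rfl, by simp [pairCost]⟩
  | cons q e ih =>
    obtain ⟨g, ⟨a, r⟩, b⟩ := q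
    obtain ⟨v, hv, L, h1, rfl, hc⟩ := ih
    obtain ⟨x, hx⟩ := exists_wordProd_eq g
    obtain ⟨y, hy⟩ := exists_wordProd_eq g⁻¹
    obtain ⟨r', hr', habs⟩ : ∃ r', genFR A (a, r') =
        (if b then genFR A (a, r) else (genFR A (a, r))⁻¹) ∧ |r'| = |r| := by
      cases b
      · exact ⟨-r, by simp [genFR_neg], abs_neg r⟩
      · exact ⟨r, by simp, rfl⟩
    -- `D z` carries the word `z` unchanged.
    let D : List (A × ℝ) → List (A × ℝ × ℝ) := fun z => z.map fun p => (p.1, p.2, p.2)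
    have hDr : ∀ z, remWord (D z) = z := fun z => by simp [D, remWord, Function.comp_def]
    have hDt : ∀ z, tgtWord (D z) = z := fun z => by simp [D, tgtWord, Function.comp_def]
    have hDc : ∀ z, pairCost μ (D z) = 0 := fun z => by
      simp [D, pairCost, Function.comp_def]
    refine ⟨_, ?_, D x ++ (a, 0, r') :: (D y ++ L), ?_, rfl, ?_⟩
    · simp only [tgtWord_append, tgtWord_cons, hDt, wordProd_append, wordProd_cons, hx, hy, hv, hr',
        List.map_cons, List.prod_cons, mul_assoc]
    · simp only [remWord_append, remWord_cons, hDr, wordProd_append, wordProd_cons, hx, hy, h1,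
        genFR_zero]
      simp
    · simp only [pairCost_append, pairCost_cons, hDc, List.map_cons, List.sum_cons, sub_zero, habs]
      linarith

theorem exists_mem_le_of_mem_wordNormSet {A : Type*} (μ : A → ℝ) (hμ : ∀ a, 0 ≤ μ a)
    (l : List (A × ℝ)) {x : ℝ}
    (hx : x ∈ wordNormSet (genFR A) (fun p => |p.2| * μ p.1) (wordProd l)) :
    ∃ y ∈ cancellationLengths μ l, y ≤ x := by
  obtain ⟨e, he, rfl⟩ := hx
  obtain ⟨v, hv, hk⟩ := exists_kills_of_expression μ e
  obtain ⟨L, h1, hL, hc⟩ := (kills_congr μ hμ (hv.trans he.symm) _).1 hk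
  obtain ⟨M, hM, hM1, hMb, hMc⟩ := exists_cancellation μ hμ L h1
  obtain rfl := hM.trans hL
  have hlen : (tgtWord M).length = M.length := by simp [tgtWord]
  refine ⟨pairCost μ M, ⟨fun i => (M.get (i.cast hlen)).2.2 - (M.get (i.cast hlen)).2.1,
    ?_, ?_, ?_⟩, hMc.trans hc⟩
  · intro i
    have h := hMb _ (M.get_mem (i.cast hlen))
    have hi : ((tgtWord M).get i).2 = (M.get (i.cast hlen)).2.2 :=
      congrArg Prod.snd (List.getElem_map (l := M) fun t => (t.1, t.2.2))
    rw [hi]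
    rw [Set.mem_uIcc] at h ⊢
    rcases h with h | h
    · left; constructor <;> linarith [h.1, h.2]
    · right; constructor <;> linarith [h.1, h.2]
  · rw [← hM1, wordProd]
    congr 1
    apply List.ext_getElem
    · simp [remWord, hlen]
    · intro i h h'
      simp only [List.getElem_ofFn, List.get_eq_getElem, List.getElem_map, remWord, tgtWord]
      exact congrArg (fun z => genFR A (_, z)) (sub_sub_cancel _ _)
  · rw [← List.sum_ofFn, pairCost]
    congr 1
    apply List.ext_getElem
    · simp [hlen]
    · intro i h h'
      simp only [List.getElem_ofFn, List.get_eq_getElem, List.getElem_map, tgtWord]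
      rfl

/-! ### Existence of the minimum -/

theorem isClosed_wordProd_eq_one_of_le {A X : Type*} [TopologicalSpace X] (n : ℕ) :
    ∀ L : List (A × C(X, ℝ)), L.length ≤ n →
      IsClosed {x : X | wordProd (L.map fun t => (t.1, t.2 x)) = 1} := by
  induction n with
  | zero =>
    intro L hL
    obtain rfl := List.length_eq_zero_iff.1 (Nat.le_zero.1 hL)
    simp [wordProd_nil]
  | succ n ih =>
    intro L hL
    rcases eq_or_ne L [] with rfl | hne
    · simp [wordProd_nil]
    -- The locus is the union, over the finitely many positions `k`, of the loci where a zero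
    -- letter at `k` may be deleted and where equally named letters at `k`, `k + 1` are merged.
    have hunion : {x : X | wordProd (L.map fun t => (t.1, t.2 x)) = 1} =
        ⋃ k : Fin L.length,
          ({x : X | ∃ t V, L.drop k = t :: V ∧ t.2 x = 0 ∧
              wordProd ((L.take k ++ V).map fun t => (t.1, t.2 x)) = 1} ∪
            {x : X | ∃ t u V, L.drop k = t :: u :: V ∧ t.1 = u.1 ∧
              wordProd ((L.take k ++ (t.1, t.2 + u.2) :: V).map fun t => (t.1, t.2 x)) = 1}) := by
      ext x
      simp only [Set.mem_iUnion, Set.mem_union, Set.mem_ofPred_eq]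
      constructor
      · intro h
        rcases exists_reduction _ h (by simpa using hne) with ⟨y, a, z, h'⟩ | ⟨y, a, r, s, z, h'⟩
        · rw [h', wordProd_delete_zero] at h
          obtain ⟨U, Z, rfl, rfl, hZ⟩ := List.map_eq_append_iff.1 h'
          obtain ⟨t, V, rfl, ht, rfl⟩ := List.map_eq_cons_iff.1 hZ
          refine ⟨⟨U.length, by simp⟩, Or.inl ⟨t, V, by simp, (Prod.mk.inj ht).2, ?_⟩⟩
          simpa using h
        · rw [h', wordProd_merge] at h
          obtain ⟨U, Z, rfl, rfl, hZ⟩ := List.map_eq_append_iff.1 h'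
          obtain ⟨t, Z', rfl, ht, hZ'⟩ := List.map_eq_cons_iff.1 hZ
          obtain ⟨u, V, rfl, hu, rfl⟩ := List.map_eq_cons_iff.1 hZ'
          obtain ⟨rfl, rfl⟩ := Prod.mk.inj ht
          obtain ⟨hu1, rfl⟩ := Prod.mk.inj hu
          refine ⟨⟨U.length, by simp⟩, Or.inr ⟨t, u, V, by simp, hu1.symm, ?_⟩⟩
          simpa using h
      · rintro ⟨k, ⟨t, V, hd, h0, h⟩ | ⟨t, u, V, hd, htu, h⟩⟩
        · rw [← List.take_append_drop k L, hd, List.map_append, List.map_cons, h0,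
            wordProd_delete_zero, ← List.map_append]
          exact h
        · rw [← List.take_append_drop k L, hd, List.map_append, List.map_cons, List.map_cons, ← htu,
            wordProd_merge]
          simpa using h
    rw [hunion]
    refine isClosed_iUnion_of_finite fun k => ?_
    have hk := congrArg List.length (List.take_append_drop k L)
    rw [List.length_append] at hk
    rcases hd : L.drop k with _ | ⟨t, V⟩
    · simp
    rw [hd, List.length_cons] at hk
    refine IsClosed.union ?_ ?_
    · have h1 : IsClosed {x : X | t.2 x = 0} := isClosed_eq t.2.continuous continuous_const
      have h2 := ih (L.take k ++ V) (by rw [List.length_append]; omega)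
      convert h1.inter h2 using 1
      ext x
      simp only [Set.mem_ofPred_eq, Set.mem_inter_iff, List.cons.injEq]
      constructor
      · rintro ⟨_, _, ⟨rfl, rfl⟩, h⟩
        exact h
      · exact fun h => ⟨t, V, ⟨rfl, rfl⟩, h⟩
    · rcases V with _ | ⟨u, V⟩
      · simp
      rw [List.length_cons] at hk
      by_cases htu : t.1 = u.1
      · have h2 := ih (L.take k ++ (t.1, t.2 + u.2) :: V)
          (by rw [List.length_append, List.length_cons]; omega)
        convert h2 using 1
        ext x
        simp only [Set.mem_ofPred_eq, List.cons.injEq]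
        constructor
        · rintro ⟨_, _, _, ⟨rfl, rfl, rfl⟩, -, h⟩
          exact h
        · exact fun h => ⟨t, u, V, ⟨rfl, rfl, rfl⟩, htu, h⟩
      · convert isClosed_empty using 1
        ext x
        simp only [Set.mem_ofPred_eq, List.cons.injEq, Set.mem_empty_iff_false, iff_false]
        rintro ⟨_, _, _, ⟨rfl, rfl, rfl⟩, h, -⟩
        exact htu h

/-- Representing `1` is a closed condition on the exponents of a word with fixed names. -/
theorem isClosed_wordProd_eq_one {A X : Type*} [TopologicalSpace X] (L : List (A × C(X, ℝ))) :
    IsClosed {x : X | wordProd (L.map fun t => (t.1, t.2 x)) = 1} :=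
  isClosed_wordProd_eq_one_of_le L.length L le_rfl

theorem exists_isLeast_cancellationLengths {A : Type*} (μ : A → ℝ) (l : List (A × ℝ)) :
    ∃ m, IsLeast (cancellationLengths μ l) m := by
  let K : Set (Fin l.length → ℝ) := Set.univ.pi fun i => Set.uIcc 0 (l.get i).2
  let Z : Set (Fin l.length → ℝ) := {s | (List.ofFn (fun i : Fin l.length =>
    genFR A ((l.get i).1, (l.get i).2 - s i))).prod = 1}
  have hK : IsCompact K := isCompact_univ_pi fun i => isCompact_uIcc
  have hZ : IsClosed Z := by
    have h := isClosed_wordProd_eq_one (X := Fin l.length → ℝ)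
      (List.ofFn fun i : Fin l.length => ((l.get i).1,
        (⟨fun s => (l.get i).2 - s i, by fun_prop⟩ : C(Fin l.length → ℝ, ℝ))))
    simp only [wordProd, List.map_ofFn] at h
    exact h
  have hne : (K ∩ Z).Nonempty := by
    -- Cancelling every letter entirely leaves the trivial word.
    refine ⟨fun i => (l.get i).2, fun i _ => Set.right_mem_uIcc, ?_⟩
    simp only [Z, Set.mem_ofPred_eq, sub_self, genFR_zero]
    simp
  have hcont : Continuous fun s : Fin l.length → ℝ => ∑ i, |s i| * μ (l.get i).1 := by
    fun_prop
  obtain ⟨s, ⟨hsK, hsZ⟩, hmin⟩ :=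
    (hK.inter_right hZ).exists_isMinOn hne hcont.continuousOn
  refine ⟨_, ⟨s, fun i => hsK i (Set.mem_univ i), hsZ, rfl⟩, ?_⟩
  rintro x ⟨s', hs', h1, rfl⟩
  exact hmin ⟨fun i _ => hs' i, h1⟩

/-- for a word `𝐰 = a₁(r₁)⋯a_k(r_k)` representing `w ∈ F_ℝ(A)`,
`‖w‖_{F_ℝ(A;μ)}` equals the minimum of `μ(𝐮) = Σᵢ |sᵢ|·μ(aᵢ)` over all cancellation
sequences `𝐮 = a₁(s₁)⋯a_k(s_k)` in `𝐰` (i.e. `sᵢ` between `0` and `rᵢ`, and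
`𝐰 − 𝐮 = a₁(r₁−s₁)⋯a_k(r_k−s_k)` representing `1`), and the minimum is attained. -/
theorem FRnorm_cancellation
    {A : Type*} (μ : A → ℝ) (hμ : ∀ a, 0 ≤ μ a) (l : List (A × ℝ)) :
    IsLeast
      { x : ℝ | ∃ s : Fin l.length → ℝ,
          (∀ i, s i ∈ Set.uIcc 0 (l.get i).2) ∧
          (List.ofFn (fun i : Fin l.length =>
            genFR A ((l.get i).1, (l.get i).2 - s i))).prod = 1 ∧
          x = ∑ i, |s i| * μ (l.get i).1 }
      (FRnorm μ (wordProd l)) := by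
  have hS : ∀ x ∈ cancellationLengths μ l, x ∈ wordNormSet (genFR A)
      (fun p => |p.2| * μ p.1) (wordProd l) := fun x hx => mem_wordNormSet_of_mem μ l hx
  obtain ⟨m, hm, hmin⟩ := exists_isLeast_cancellationLengths μ l
  have hleast : IsLeast (wordNormSet (genFR A) (fun p => |p.2| * μ p.1) (wordProd l)) m := by
    refine ⟨hS m hm, fun x hx => ?_⟩
    obtain ⟨y, hy, hyx⟩ := exists_mem_le_of_mem_wordNormSet μ hμ l hx
    exact (hmin hy).trans hyx
  have hnorm : FRnorm μ (wordProd l) = m := hleast.csInf_eq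
  rw [hnorm]
  exact ⟨hm, hmin⟩
end
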